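/- arXiv:2202.04722 — 2 statements merged into one kernel-verified Lean document; each statement's English description precedes it below -/
import Mathlib

section
/- Let f: ℝ → ℂ be a continuous 2π-periodic function, let 0 ≤ α < 1/4, let N be a positive integer, and let x̃_{−N},…,x̃_N be a set of α-perturbed nodes. Let q̃_N ∈ T_N be the unique trigonometric polynomial of degree ≤ N with q̃_N(x̃_j) = f(x̃_j) for all −N ≤ j ≤ N. Then ‖f − q̃_N‖_{L^∞[−π,π)} ≤ (1 + √(2N+1)/(cos(πα) − sin(πα))) · min_{q ∈ T_N} ‖f − q‖_{L^∞[−π,π)}. -/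
open Real Finset

/-- `q` is a trigonometric polynomial of degree ≤ N. -/
def IsTrigPoly (N : ℕ) (q : ℝ → ℂ) : Prop :=
  ∃ c : ℤ → ℂ, ∀ x : ℝ,
    q x = ∑ k ∈ Finset.Icc (-(N:ℤ)) (N:ℤ), c k * Complex.exp (Complex.I * (k : ℂ) * (x : ℂ))

/-- `x` is a set of α-perturbed nodes of size 2N+1. -/
def PerturbedNodes (N : ℕ) (α : ℝ) (x : ℤ → ℝ) : Prop :=
  ∀ j ∈ Finset.Icc (-(N:ℤ)) (N:ℤ),
    |x j - (j : ℝ) * (2*π/(2*N+1))| ≤ α * (2*π/(2*N+1))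

/-- The supremum of `‖g‖` over `[−π, π)`. -/
noncomputable def supIco (g : ℝ → ℂ) : ℝ :=
  ⨆ x : Set.Ico (-π) π, ‖g x‖

/-- A continuous function on `[-π, π]` with equal end values and summable Fourier coefficients is
the pointwise sum of its Fourier series on `(-π, π]`. -/
lemma hasSum_fourier_of_integral_eq {g : ℝ → ℂ} (hg : Continuous g) (hgp : g (-π) = g π)
    {c : ℤ → ℂ} (hc : ∀ n : ℤ,
      ∫ t in (-π)..π, Complex.exp (Complex.I * ((-n : ℝ) : ℂ) * t) * g t = 2 * π * c n)
    (hs : Summable c) {t : ℝ} (ht : t ∈ Set.Ioc (-π) π) :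
    HasSum (fun n : ℤ => c n * Complex.exp (Complex.I * n * t)) (g t) := by
  have : Fact (0 < 2 * π) := ⟨Real.two_pi_pos⟩
  have hend : -π + 2 * π = π := by ring
  have hcont : Continuous (AddCircle.liftIoc (2 * π) (-π) g) :=
    AddCircle.liftIoc_continuous (by rw [hend, hgp]) hg.continuousOn
  let F : C(AddCircle (2 * π), ℂ) := ⟨_, hcont⟩
  have hpi : (π : ℂ) ≠ 0 := by exact_mod_cast Real.pi_ne_zero
  have hcoef : fourierCoeff F = c := by
    funext n
    change fourierCoeff (AddCircle.liftIoc (2 * π) (-π) g) n = c n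
    rw [fourierCoeff_eq_intervalIntegral _ _ (-π), hend]
    have : ∫ x in (-π)..π, fourier (-n) (x : AddCircle (2 * π)) •
        AddCircle.liftIoc (2 * π) (-π) g x = 2 * π * c n := by
      rw [← hc n]
      refine intervalIntegral.integral_congr_ae (Filter.Eventually.of_forall fun x hx => ?_)
      rw [Set.uIoc_of_le (by linarith [Real.pi_pos])] at hx
      rw [AddCircle.liftIoc_coe_apply (by rwa [hend]), fourier_coe_apply, smul_eq_mul]
      congr 2
      push_cast
      field_simp
    rw [this, Complex.real_smul]
    push_cast
    field_simp
  have h := has_pointwise_sum_fourier_series_of_summable (f := F) (by rwa [hcoef])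
    (t : AddCircle (2 * π))
  rw [hcoef] at h
  have hval : F t = g t := AddCircle.liftIoc_coe_apply (by rwa [hend])
  rw [hval] at h
  convert h using 2 with n
  rw [fourier_coe_apply, smul_eq_mul]
  congr 2
  push_cast
  field_simp

lemma integral_cexp_eq_sinc (a : ℝ) :
    ∫ t in (-π)..π, Complex.exp (Complex.I * a * t) = 2 * π * (Real.sinc (π * a) : ℂ) := by
  have hpi : (π : ℂ) ≠ 0 := by exact_mod_cast Real.pi_ne_zero
  rcases eq_or_ne a 0 with rfl | ha
  · simp; ring
  · have ha' : (a : ℂ) ≠ 0 := by exact_mod_cast ha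
    rw [integral_exp_mul_complex (mul_ne_zero Complex.I_ne_zero ha'),
      Real.sinc_of_ne_zero (mul_ne_zero Real.pi_ne_zero ha)]
    push_cast
    rw [Complex.sin]
    field_simp
    rw [show Complex.I * (a : ℂ) * π = π * a * Complex.I by ring, Complex.I_sq]
    ring

/-- Absolute values of the Fourier coefficients of `1 - cos (δ t)` on `[-π, π]`. -/
noncomputable def cosWeight (n : ℤ) (δ : ℝ) : ℝ :=
  if n = 0 then 1 - Real.sinc (π * δ) else δ * Real.sin (π * δ) / (π * ((n : ℝ) ^ 2 - δ ^ 2))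

/-- The weights of the half-integer frequencies `n - 1/2` in the expansion of `sin (δ t)`. -/
noncomputable def sinWeight (n : ℤ) (δ : ℝ) : ℝ :=
  δ * Real.cos (π * δ) / (π * (((n : ℝ) - 1 / 2) ^ 2 - δ ^ 2))

lemma one_le_intCast_sq {n : ℤ} (hn : n ≠ 0) : (1 : ℝ) ≤ (n : ℝ) ^ 2 := by
  have : 0 < n ^ 2 := by positivity
  exact_mod_cast this

lemma quarter_le_intCast_sub_half_sq (n : ℤ) : (1 / 4 : ℝ) ≤ ((n : ℝ) - 1 / 2) ^ 2 := by
  have : (0 : ℝ) ≤ (n : ℝ) * (n - 1) := by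
    have : 0 ≤ n * (n - 1) := by
      rcases le_or_gt n 0 with h | h <;> nlinarith
    exact_mod_cast this
  nlinarith

lemma sq_le_of_abs_le_quarter {δ : ℝ} (hδ : |δ| ≤ 1 / 4) : δ ^ 2 ≤ 1 / 16 := by
  rw [← sq_abs]; nlinarith [abs_nonneg δ]

lemma summable_of_abs_le_one_div_sq {w : ℤ → ℝ} (h : ∀ n ≠ 0, |w n| ≤ 1 / (n : ℝ) ^ 2) :
    Summable w := by
  refine Summable.of_norm_bounded_eventually (Real.summable_one_div_int_pow.mpr one_lt_two) ?_
  filter_upwards [(Set.finite_singleton (0 : ℤ)).compl_mem_cofinite] with n hn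
  exact h n hn

lemma summable_cosWeight {δ : ℝ} (hδ : |δ| ≤ 1 / 4) : Summable fun n => cosWeight n δ := by
  refine summable_of_abs_le_one_div_sq fun n hn => ?_
  have h1 := one_le_intCast_sq hn
  have h2 := sq_le_of_abs_le_quarter hδ
  have hpi := Real.pi_gt_three
  rw [cosWeight, if_neg hn, abs_div, abs_mul,
    abs_of_pos (a := π * _) (by apply mul_pos <;> linarith),
    div_le_div_iff₀ (by apply mul_pos <;> linarith) (by linarith)]
  have h3 := Real.abs_sin_le_one (π * δ)
  have h4 : |δ| * |Real.sin (π * δ)| ≤ 1 / 4 := by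
    nlinarith [abs_nonneg δ, abs_nonneg (Real.sin (π * δ))]
  nlinarith

lemma summable_sinWeight {δ : ℝ} (hδ : |δ| ≤ 1 / 4) : Summable fun n => sinWeight n δ := by
  refine summable_of_abs_le_one_div_sq fun n hn => ?_
  have h1 := one_le_intCast_sq hn
  have h0 := quarter_le_intCast_sub_half_sq n
  have h2 := sq_le_of_abs_le_quarter hδ
  have hpi := Real.pi_gt_three
  rw [sinWeight, abs_div, abs_mul,
    abs_of_pos (a := π * _) (by apply mul_pos <;> linarith),
    div_le_div_iff₀ (by apply mul_pos <;> linarith) (by linarith)]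
  have h3 := Real.abs_cos_le_one (π * δ)
  have h4 : |δ| * |Real.cos (π * δ)| ≤ 1 / 4 := by
    nlinarith [abs_nonneg δ, abs_nonneg (Real.cos (π * δ))]
  have h5 : (0 : ℝ) ≤ (n - 1) * (13 * n - 3) := by
    have : 0 ≤ (n - 1) * (13 * n - 3) := by
      rcases lt_or_gt_of_ne hn with h | h <;> nlinarith
    exact_mod_cast this
  nlinarith

lemma neg_one_zpow_mul_self (n : ℤ) : ((-1 : ℂ) ^ n) * (-1) ^ n = 1 := by
  rw [← mul_zpow]; simp

lemma cexp_I_mul_int_mul_pi (n : ℤ) : Complex.exp (Complex.I * n * π) = (-1) ^ n := by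
  rw [← Complex.exp_pi_mul_I, ← Complex.exp_int_mul]
  congr 1; ring

lemma sin_pi_mul_sub_int (δ : ℝ) (n : ℤ) :
    Real.sin (π * (δ - n)) = (-1) ^ n * Real.sin (π * δ) := by
  rw [← Real.sin_sub_int_mul_pi]; ring_nf

lemma sin_pi_mul_add_int (δ : ℝ) (n : ℤ) :
    Real.sin (π * (δ + n)) = (-1) ^ n * Real.sin (π * δ) := by
  rw [← Real.sin_add_int_mul_pi]; ring_nf

lemma cosWeight_eq_sinc {δ : ℝ} (hδ : |δ| ≤ 1 / 4) (n : ℤ) :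
    (-1) ^ n * cosWeight n δ = (if n = 0 then 1 else 0) -
      (Real.sinc (π * (δ - n)) + Real.sinc (π * (δ + n))) / 2 := by
  rcases eq_or_ne n 0 with rfl | hn
  · simp [cosWeight]
  have h1 := one_le_intCast_sq hn
  have h2 := sq_le_of_abs_le_quarter hδ
  have h3 : δ - n ≠ 0 := fun h => by
    have : δ = n := by linarith
    rw [this] at h2; linarith
  have h4 : δ + n ≠ 0 := fun h => by
    have : δ = -n := by linarith
    rw [this] at h2; linarith
  have h5 : (n : ℝ) ^ 2 - δ ^ 2 ≠ 0 := by linarith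
  rw [cosWeight, if_neg hn, if_neg hn, Real.sinc_of_ne_zero (mul_ne_zero Real.pi_ne_zero h3),
    Real.sinc_of_ne_zero (mul_ne_zero Real.pi_ne_zero h4), sin_pi_mul_sub_int, sin_pi_mul_add_int]
  have := Real.pi_ne_zero
  field_simp
  ring

lemma sinWeight_eq_sinc {δ : ℝ} (hδ : |δ| ≤ 1 / 4) (n : ℤ) :
    (-1) ^ n * sinWeight n δ =
      (Real.sinc (π * (δ - 1 / 2 + n)) - Real.sinc (π * (δ + 1 / 2 - n))) / 2 := by
  have h1 := quarter_le_intCast_sub_half_sq n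
  have h2 := sq_le_of_abs_le_quarter hδ
  have h3 : δ - 1 / 2 + n ≠ 0 := fun h => by
    have : δ = -(n - 1 / 2) := by linarith
    rw [this] at h2; linarith
  have h4 : δ + 1 / 2 - n ≠ 0 := fun h => by
    have : δ = n - 1 / 2 := by linarith
    rw [this] at h2; linarith
  have h5 : ((n : ℝ) - 1 / 2) ^ 2 - δ ^ 2 ≠ 0 := by linarith
  have h6 : Real.sin (π * (δ + 1 / 2)) = Real.cos (π * δ) := by
    rw [← Real.sin_add_pi_div_two]; ring_nf
  have h7 : Real.sin (π * (δ - 1 / 2)) = -Real.cos (π * δ) := by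
    rw [← Real.sin_sub_pi_div_two]; ring_nf
  rw [sinWeight, Real.sinc_of_ne_zero (mul_ne_zero Real.pi_ne_zero h3),
    Real.sinc_of_ne_zero (mul_ne_zero Real.pi_ne_zero h4), sin_pi_mul_sub_int, sin_pi_mul_add_int,
    h6, h7, mul_div_mul_comm]
  have e : ((n : ℝ) - 1 / 2) ^ 2 - δ ^ 2 = -((δ - 1 / 2 + n) * (δ + 1 / 2 - n)) := by ring
  rw [e]
  have := Real.pi_ne_zero
  generalize hA : δ - 1 / 2 + (n : ℝ) = A at *
  generalize hB : δ + 1 / 2 - (n : ℝ) = B at *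
  have hAB : δ = (A + B) / 2 := by linarith
  generalize Real.cos (π * δ) = C
  rw [hAB]
  field_simp
  ring

lemma hasSum_one_sub_cos {δ t : ℝ} (hδ : |δ| ≤ 1 / 4) (ht : t ∈ Set.Ioc (-π) π) :
    HasSum (fun n : ℤ => ((-1) ^ n * cosWeight n δ : ℂ) * Complex.exp (Complex.I * n * t))
      (1 - Complex.cos (δ * t)) := by
  refine hasSum_fourier_of_integral_eq (g := fun t : ℝ => 1 - Complex.cos (δ * t))
    (c := fun n => (-1) ^ n * cosWeight n δ) (by fun_prop) (by simp) (fun n => ?_) ?_ ht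
  · have hI (a : ℝ) : IntervalIntegrable (fun t : ℝ => Complex.exp (Complex.I * a * t))
        MeasureTheory.volume (-π) π := Continuous.intervalIntegrable (by fun_prop) _ _
    have hpt (t : ℝ) : Complex.exp (Complex.I * ((-n : ℝ) : ℂ) * t) * (1 - Complex.cos (δ * t)) =
        Complex.exp (Complex.I * ((-n : ℝ) : ℂ) * t) -
          (Complex.exp (Complex.I * ((δ - n : ℝ) : ℂ) * t) +
            Complex.exp (Complex.I * ((-(δ + n) : ℝ) : ℂ) * t)) / 2 := by
      rw [Complex.cos, mul_sub, mul_one, ← mul_div_assoc, mul_add, ← Complex.exp_add,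
        ← Complex.exp_add]
      push_cast
      ring_nf
    simp only [hpt]
    rw [intervalIntegral.integral_sub (hI _) (((hI _).add (hI _)).div_const 2),
      intervalIntegral.integral_div, intervalIntegral.integral_add (hI _) (hI _),
      integral_cexp_eq_sinc, integral_cexp_eq_sinc, integral_cexp_eq_sinc]
    have h := congrArg (fun r : ℝ => (r : ℂ)) (cosWeight_eq_sinc hδ n)
    have hn : Real.sinc (π * -n) = if n = 0 then 1 else 0 := by
      split_ifs with hn
      · simp [hn]
      · rw [Real.sinc_of_ne_zero (by simpa [Real.pi_ne_zero] using hn)]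
        rw [mul_neg, Real.sin_neg, mul_comm, Real.sin_int_mul_pi]; simp
    rw [hn, mul_neg, Real.sinc_neg]
    push_cast at h ⊢
    rw [h]
    ring
  · refine Summable.of_norm ?_
    simpa using (summable_cosWeight hδ).norm

lemma hasSum_sin {δ t : ℝ} (hδ : |δ| ≤ 1 / 4) (ht : t ∈ Set.Ioc (-π) π) :
    HasSum (fun n : ℤ => (Complex.I * (-1) ^ n * sinWeight n δ : ℂ) *
      Complex.exp (Complex.I * (n - 1 / 2) * t)) (Complex.sin (δ * t)) := by
  have key : HasSum (fun n : ℤ => (Complex.I * (-1) ^ n * sinWeight n δ : ℂ) *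
      Complex.exp (Complex.I * n * t))
      (Complex.sin (δ * t) * Complex.exp (Complex.I * (1 / 2) * t)) := by
    refine hasSum_fourier_of_integral_eq
      (g := fun t : ℝ => Complex.sin (δ * t) * Complex.exp (Complex.I * (1 / 2) * t))
      (c := fun n => Complex.I * (-1) ^ n * sinWeight n δ) (by fun_prop) ?_ (fun n => ?_) ?_ ht
    · have h1 : Complex.exp (Complex.I * (1 / 2) * π) = Complex.I := by
        rw [show Complex.I * (1 / 2) * (π : ℂ) = π / 2 * Complex.I by ring,
          Complex.exp_pi_div_two_mul_I]
      have h2 : Complex.exp (Complex.I * (1 / 2) * (-π : ℝ)) = -Complex.I := by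
        rw [← Complex.exp_neg_pi_div_two_mul_I]; push_cast; ring_nf
      simp only [h1, h2]
      simp
    · have hI (a : ℝ) : IntervalIntegrable (fun t : ℝ => Complex.exp (Complex.I * a * t))
          MeasureTheory.volume (-π) π := Continuous.intervalIntegrable (by fun_prop) _ _
      have hpt (t : ℝ) : Complex.exp (Complex.I * ((-n : ℝ) : ℂ) * t) *
          (Complex.sin (δ * t) * Complex.exp (Complex.I * (1 / 2) * t)) =
          (Complex.exp (Complex.I * ((-(δ - 1 / 2 + n) : ℝ) : ℂ) * t) -
            Complex.exp (Complex.I * ((δ + 1 / 2 - n : ℝ) : ℂ) * t)) * (Complex.I / 2) := by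
        have e1 : Complex.exp (Complex.I * ((-(δ - 1 / 2 + n) : ℝ) : ℂ) * t) =
            Complex.exp (Complex.I * ((-n : ℝ) : ℂ) * t) * Complex.exp (-(δ * t) * Complex.I) *
              Complex.exp (Complex.I * (1 / 2) * t) := by
          rw [← Complex.exp_add, ← Complex.exp_add]; push_cast; ring_nf
        have e2 : Complex.exp (Complex.I * ((δ + 1 / 2 - n : ℝ) : ℂ) * t) =
            Complex.exp (Complex.I * ((-n : ℝ) : ℂ) * t) * Complex.exp (δ * t * Complex.I) *
              Complex.exp (Complex.I * (1 / 2) * t) := by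
          rw [← Complex.exp_add, ← Complex.exp_add]; push_cast; ring_nf
        rw [e1, e2, Complex.sin]
        ring
      simp only [hpt]
      rw [intervalIntegral.integral_mul_const, intervalIntegral.integral_sub (hI _) (hI _),
        integral_cexp_eq_sinc, integral_cexp_eq_sinc, mul_neg, Real.sinc_neg]
      have h := congrArg (fun r : ℝ => (r : ℂ)) (sinWeight_eq_sinc hδ n)
      push_cast at h ⊢
      rw [mul_assoc Complex.I, h]
      ring
    · refine Summable.of_norm ?_
      simpa using (summable_sinWeight hδ).norm
  have h := key.mul_right (Complex.exp (-(Complex.I * (1 / 2) * t)))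
  rw [mul_assoc (Complex.sin _), ← Complex.exp_add, add_neg_cancel, Complex.exp_zero, mul_one] at h
  have hexp (n : ℤ) : Complex.exp (Complex.I * (n - 1 / 2) * t) =
      Complex.exp (Complex.I * n * t) * Complex.exp (-(Complex.I * (1 / 2) * t)) := by
    rw [← Complex.exp_add]
    ring_nf
  simp only [hexp, ← mul_assoc]
  simpa only [← mul_assoc] using h

lemma pi_mem_Ioc : π ∈ Set.Ioc (-π) π := ⟨by linarith [Real.pi_pos], le_rfl⟩

lemma hasSum_cosWeight {δ : ℝ} (hδ : |δ| ≤ 1 / 4) :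
    HasSum (fun n => cosWeight n δ) (1 - Real.cos (π * δ)) := by
  have h := hasSum_one_sub_cos hδ pi_mem_Ioc
  rw [← Complex.hasSum_ofReal]
  push_cast
  rw [mul_comm (π : ℂ)]
  convert h using 2 with n
  rw [cexp_I_mul_int_mul_pi]
  linear_combination -(cosWeight n δ : ℂ) * neg_one_zpow_mul_self n

lemma hasSum_sinWeight {δ : ℝ} (hδ : |δ| ≤ 1 / 4) :
    HasSum (fun n => sinWeight n δ) (Real.sin (π * δ)) := by
  have h := hasSum_sin hδ pi_mem_Ioc
  rw [← Complex.hasSum_ofReal]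
  push_cast
  rw [mul_comm (π : ℂ)]
  convert h using 2 with n
  have : Complex.exp (Complex.I * (n - 1 / 2) * π) = (-1) ^ n * -Complex.I := by
    rw [← cexp_I_mul_int_mul_pi, ← Complex.exp_neg_pi_div_two_mul_I, ← Complex.exp_add]; ring_nf
  rw [this]
  linear_combination -(sinWeight n δ : ℂ) * neg_one_zpow_mul_self n +
    (-1) ^ n * (-1) ^ n * (sinWeight n δ : ℂ) * Complex.I_sq

lemma cosWeight_abs (n : ℤ) (δ : ℝ) : cosWeight n |δ| = cosWeight n δ := by
  rcases abs_choice δ with h | h <;> rw [h]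
  simp [cosWeight, Real.sinc_neg]

lemma sinWeight_neg (n : ℤ) (δ : ℝ) : sinWeight n (-δ) = -sinWeight n δ := by
  simp [sinWeight, neg_div]

lemma sinc_le_sinc_of_le {x y : ℝ} (hx : 0 ≤ x) (hxy : x ≤ y) (hy : y ≤ π) :
    Real.sinc y ≤ Real.sinc x := by
  rcases hx.eq_or_lt with rfl | hx
  · simpa using Real.sinc_le_one y
  have h := strictConcaveOn_sin_Icc.concaveOn.antitoneOn_slope_gt
    (Set.left_mem_Icc.mpr Real.pi_pos.le) (a := x) (b := y) ⟨⟨hx.le, hxy.trans hy⟩, hx⟩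
    ⟨⟨by linarith, hy⟩, hx.trans_le hxy⟩ hxy
  rw [Real.sinc_of_ne_zero hx.ne', Real.sinc_of_ne_zero (hx.trans_le hxy).ne']
  simpa [slope_def_field] using h

lemma cosWeight_mono (n : ℤ) {x y : ℝ} (hx : 0 ≤ x) (hxy : x ≤ y) (hy : y ≤ 1 / 4) :
    cosWeight n x ≤ cosWeight n y := by
  have hpi := Real.pi_pos
  unfold cosWeight
  split_ifs with hn
  · have := sinc_le_sinc_of_le (x := π * x) (y := π * y) (by positivity) (by gcongr) (by nlinarith)
    linarith
  · have h1 := one_le_intCast_sq hn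
    have hs : Real.sin (π * x) ≤ Real.sin (π * y) :=
      Real.sin_le_sin_of_le_of_le_pi_div_two (by nlinarith) (by nlinarith) (by gcongr)
    have hs0 : 0 ≤ Real.sin (π * x) :=
      Real.sin_nonneg_of_nonneg_of_le_pi (by positivity) (by nlinarith)
    have hpos : 0 < (n : ℝ) ^ 2 - y ^ 2 := by nlinarith
    have hy0 := hx.trans hxy
    gcongr
    exact mul_nonneg hy0 (hs0.trans hs)

lemma cosWeight_nonneg (n : ℤ) {x : ℝ} (hx : 0 ≤ x) (hx' : x ≤ 1 / 4) : 0 ≤ cosWeight n x := by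
  have := cosWeight_mono n le_rfl hx hx'
  simpa [cosWeight] using this

lemma mul_cos_pi_mul_mono {x y : ℝ} (hx : 0 ≤ x) (hxy : x ≤ y) (hy : y ≤ 1 / 4) :
    x * Real.cos (π * x) ≤ y * Real.cos (π * y) := by
  have hmono : MonotoneOn (fun t : ℝ => t * Real.cos (π * t)) (Set.Icc 0 (1 / 4)) := by
    refine monotoneOn_of_hasDerivWithinAt_nonneg (convex_Icc _ _) (by fun_prop)
      (f' := fun t => 1 * Real.cos (π * t) + t * (-Real.sin (π * t) * (π * 1))) (fun t _ => ?_)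
      (fun t ht => ?_)
    · exact ((hasDerivAt_id t).mul
        (((hasDerivAt_id t).const_mul π).cos)).hasDerivWithinAt
    · rw [interior_Icc] at ht
      have hpi := Real.pi_pos
      have hpi' := Real.pi_lt_four
      have hs0 : 0 ≤ Real.sin (π * t) :=
        Real.sin_nonneg_of_nonneg_of_le_pi (by nlinarith [ht.1]) (by nlinarith [ht.2])
      have hsc : Real.sin (π * t) ≤ Real.cos (π * t) := by
        rw [← Real.sin_pi_div_two_sub]
        exact Real.sin_le_sin_of_le_of_le_pi_div_two (by nlinarith [ht.1, ht.2])
          (by nlinarith [ht.1, ht.2]) (by nlinarith [ht.1, ht.2])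
      have ht1 : t * π ≤ 1 := by nlinarith [ht.1, ht.2]
      nlinarith
  exact hmono ⟨hx, hxy.trans hy⟩ ⟨hx.trans hxy, hy⟩ hxy

lemma sinWeight_mono (n : ℤ) {x y : ℝ} (hx : 0 ≤ x) (hxy : x ≤ y) (hy : y ≤ 1 / 4) :
    sinWeight n x ≤ sinWeight n y := by
  have hpi := Real.pi_pos
  have h1 := quarter_le_intCast_sub_half_sq n
  have hm := mul_cos_pi_mul_mono hx hxy hy
  have hm0 := mul_cos_pi_mul_mono le_rfl hx (hxy.trans hy)
  rw [zero_mul] at hm0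
  have hpos : 0 < ((n : ℝ) - 1 / 2) ^ 2 - y ^ 2 := by nlinarith
  unfold sinWeight
  gcongr
  exact hm0.trans hm

lemma sinWeight_nonneg (n : ℤ) {x : ℝ} (hx : 0 ≤ x) (hx' : x ≤ 1 / 4) : 0 ≤ sinWeight n x := by
  have := sinWeight_mono n le_rfl hx hx'
  simpa [sinWeight] using this

lemma abs_cosWeight_le (n : ℤ) {δ α : ℝ} (hδ : |δ| ≤ α) (hα : α ≤ 1 / 4) :
    |cosWeight n δ| ≤ cosWeight n α := by
  rw [← cosWeight_abs, abs_of_nonneg (cosWeight_nonneg n (abs_nonneg _) (hδ.trans hα))]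
  exact cosWeight_mono n (abs_nonneg _) hδ hα

lemma abs_sinWeight_le (n : ℤ) {δ α : ℝ} (hδ : |δ| ≤ α) (hα : α ≤ 1 / 4) :
    |sinWeight n δ| ≤ sinWeight n α := by
  have h : |sinWeight n δ| = sinWeight n |δ| := by
    have h0 := sinWeight_nonneg n (abs_nonneg δ) (hδ.trans hα)
    rcases abs_choice δ with h | h <;> rw [h] at h0 ⊢
    · exact abs_of_nonneg h0
    · rw [← abs_of_nonneg h0, sinWeight_neg, abs_neg]
  rw [h]
  exact sinWeight_mono n (abs_nonneg _) hδ hα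

/-- The sum of the `(2N+1)`-th roots of unity `exp (i m j h)`, `h = 2π / (2N+1)`, over `-N ≤ j ≤ N`
vanishes for `0 < |m| < 2N+1`. -/
lemma sum_cexp_eq_zero (N : ℕ) {m : ℤ} (hm : m ≠ 0) (hm1 : -(2 * N + 1 : ℤ) < m)
    (hm2 : m < 2 * N + 1) :
    ∑ j ∈ Finset.Icc (-(N : ℤ)) N,
      Complex.exp (Complex.I * m * ((j * (2 * π / (2 * N + 1)) : ℝ) : ℂ)) = 0 := by
  have hK : (2 * (N : ℂ) + 1) ≠ 0 := by exact_mod_cast (by omega : 2 * N + 1 ≠ 0)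
  set z : ℂ := Complex.exp (2 * π * Complex.I * (m / (2 * N + 1))) with hz
  have hterm (j : ℤ) :
      Complex.exp (Complex.I * m * ((j * (2 * π / (2 * N + 1)) : ℝ) : ℂ)) = z ^ j := by
    rw [hz, ← Complex.exp_int_mul]
    congr 1
    push_cast
    ring
  have hzK : z ^ (2 * N + 1) = 1 := by
    rw [hz, ← Complex.exp_nat_mul, Complex.exp_eq_one_iff]
    refine ⟨m, ?_⟩
    push_cast
    field_simp
  have hz1 : z ≠ 1 := by
    intro h
    rw [hz, Complex.exp_eq_one_iff] at h
    obtain ⟨l, hl⟩ := h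
    have h1 : (m : ℂ) / (2 * N + 1) = l := by
      have := Complex.two_pi_I_ne_zero
      apply mul_left_cancel₀ this
      rw [hl]; ring
    rw [div_eq_iff hK] at h1
    have h2 : m = l * (2 * N + 1) := by exact_mod_cast h1
    have h3 : l < 1 := by nlinarith
    have h4 : -1 < l := by nlinarith
    obtain rfl : l = 0 := by omega
    exact hm (by simpa using h2)
  have hz0 : z ≠ 0 := Complex.exp_ne_zero _
  have hgeom : ∑ i ∈ Finset.range (2 * N + 1), z ^ i = 0 := by
    rw [geom_sum_eq hz1, hzK]; simp
  simp only [hterm]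
  have : ∑ j ∈ Finset.Icc (-(N : ℤ)) N, z ^ j =
      ∑ i ∈ Finset.range (2 * N + 1), z ^ (-(N : ℤ)) * z ^ i := by
    symm
    refine Finset.sum_bij (fun i _ => (i : ℤ) - N) ?_ ?_ ?_ ?_
    · intro i hi; simp at hi ⊢; omega
    · intro i _ j _ h; simpa using h
    · intro j hj
      simp only [Finset.mem_Icc] at hj
      exact ⟨(j + N).toNat, by simp; omega, by omega⟩
    · intro i _
      rw [← zpow_natCast, ← zpow_add₀ hz0]
      congr 1; ring
  rw [this, ← Finset.mul_sum, hgeom, mul_zero]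

/-- Discrete Parseval identity on the equispaced grid. -/
lemma sum_norm_sq_trigPoly_grid (N : ℕ) (a : ℤ → ℂ) :
    ∑ j ∈ Finset.Icc (-(N : ℤ)) N, ‖∑ k ∈ Finset.Icc (-(N : ℤ)) N,
      a k * Complex.exp (Complex.I * k * ((j * (2 * π / (2 * N + 1)) : ℝ) : ℂ))‖ ^ 2 =
    (2 * N + 1) * ∑ k ∈ Finset.Icc (-(N : ℤ)) N, ‖a k‖ ^ 2 := by
  have hconj (k : ℤ) (r : ℝ) : (starRingEnd ℂ) (Complex.exp (Complex.I * k * r)) =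
      Complex.exp (Complex.I * ((-k : ℤ) : ℂ) * r) := by
    rw [← Complex.exp_conj]; simp
  have hsq (w : ℂ) : ((‖w‖ ^ 2 : ℝ) : ℂ) = w * (starRingEnd ℂ) w := by
    rw [Complex.mul_conj, Complex.normSq_eq_norm_sq]
  apply Complex.ofReal_injective
  rw [Complex.ofReal_sum, Complex.ofReal_mul, Complex.ofReal_sum]
  simp only [hsq, map_sum, map_mul, hconj, Finset.sum_mul_sum]
  rw [Finset.sum_comm, Finset.mul_sum]
  refine Finset.sum_congr rfl fun k hk => ?_
  rw [Finset.sum_comm, Finset.sum_eq_single_of_mem k hk]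
  · have (j : ℤ) : a k * Complex.exp (Complex.I * k * ((j * (2 * π / (2 * N + 1)) : ℝ) : ℂ)) *
        ((starRingEnd ℂ) (a k) *
          Complex.exp (Complex.I * ((-k : ℤ) : ℂ) * ((j * (2 * π / (2 * N + 1)) : ℝ) : ℂ))) =
        a k * (starRingEnd ℂ) (a k) := by
      rw [mul_mul_mul_comm, ← Complex.exp_add]
      simp
    simp only [this, Finset.sum_const, Int.card_Icc, nsmul_eq_mul]
    rw [show ((N : ℤ) + 1 - -(N : ℤ)).toNat = 2 * N + 1 by omega]
    push_cast
    ring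
  · intro l hl hlk
    have (j : ℤ) : a k * Complex.exp (Complex.I * k * ((j * (2 * π / (2 * N + 1)) : ℝ) : ℂ)) *
        ((starRingEnd ℂ) (a l) *
          Complex.exp (Complex.I * ((-l : ℤ) : ℂ) * ((j * (2 * π / (2 * N + 1)) : ℝ) : ℂ))) =
        a k * (starRingEnd ℂ) (a l) *
          Complex.exp (Complex.I * ((k - l : ℤ) : ℂ) * ((j * (2 * π / (2 * N + 1)) : ℝ) : ℂ)) := by
      rw [mul_mul_mul_comm, ← Complex.exp_add]
      congr 2
      push_cast
      ring
    rw [Finset.mem_Icc] at hk hl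
    simp only [this]
    rw [← Finset.mul_sum, sum_cexp_eq_zero N (sub_ne_zero.mpr hlk.symm) (by omega) (by omega),
      mul_zero]

/-- If each coordinate of `v` is a weighted series of coordinates of vectors of norm `M`, with
weights dominated uniformly in the coordinate by `W n`, then `‖v‖ ≤ (∑ W n) * M`. -/
lemma norm_le_of_hasSum_weighted {ι : Type*} [Fintype ι] {v : EuclideanSpace ℂ ι}
    {u : ℤ → EuclideanSpace ℂ ι} {w : ℤ → ι → ℂ} {W : ℤ → ℝ} {S M : ℝ}
    (hu : ∀ n, ‖u n‖ = M) (hw : ∀ n j, ‖w n j‖ ≤ W n) (hW : HasSum W S)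
    (hv : ∀ j, HasSum (fun n => w n j * u n j) (v j)) : ‖v‖ ≤ S * M := by
  have hsum : HasSum (fun n => WithLp.toLp 2 (fun j => w n j * u n j)) v :=
    (PiLp.continuousLinearEquiv 2 ℂ (fun _ : ι => ℂ)).symm.toContinuousLinearMap.hasSum
      (Pi.hasSum.mpr hv)
  refine hsum.norm_le_of_bounded (hW.mul_right M) fun n => ?_
  by_cases hι : Nonempty ι
  · have hWn : 0 ≤ W n := (norm_nonneg _).trans (hw n hι.some)
    rw [← hu n, EuclideanSpace.norm_eq, EuclideanSpace.norm_eq, ← Real.sqrt_sq hWn,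
      ← Real.sqrt_mul (sq_nonneg _), Finset.mul_sum]
    refine Real.sqrt_le_sqrt (Finset.sum_le_sum fun j _ => ?_)
    rw [norm_mul, mul_pow]
    gcongr
    exact hw n j
  · rw [not_nonempty_iff] at hι
    rw [← hu n]
    simp [EuclideanSpace.norm_eq]

/-- The vector of values `∑ a k exp (i k j h)` on the equispaced grid. -/
noncomputable def gridValues (N : ℕ) (a : ℤ → ℂ) :
    EuclideanSpace ℂ (Finset.Icc (-(N : ℤ)) (N : ℤ)) :=
  WithLp.toLp 2 fun j => ∑ k ∈ Finset.Icc (-(N : ℤ)) N,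
    a k * Complex.exp (Complex.I * k * (((j : ℤ) * (2 * π / (2 * N + 1)) : ℝ) : ℂ))

lemma norm_gridValues (N : ℕ) (a : ℤ → ℂ) :
    ‖gridValues N a‖ =
      Real.sqrt ((2 * N + 1) * ∑ k ∈ Finset.Icc (-(N : ℤ)) N, ‖a k‖ ^ 2) := by
  rw [← sum_norm_sq_trigPoly_grid, EuclideanSpace.norm_eq]
  congr 1
  exact Finset.sum_coe_sort (Finset.Icc (-(N : ℤ)) N) fun j =>
    ‖∑ k ∈ Finset.Icc (-(N : ℤ)) N,
      a k * Complex.exp (Complex.I * k * ((j * (2 * π / (2 * N + 1)) : ℝ) : ℂ))‖ ^ 2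

lemma norm_gridValues_mul_cexp (N : ℕ) (a : ℤ → ℂ) (ν : ℤ → ℝ) :
    ‖gridValues N fun k => a k * Complex.exp (Complex.I * ν k)‖ = ‖gridValues N a‖ := by
  simp only [norm_gridValues, norm_mul, mul_comm Complex.I, Complex.norm_exp_ofReal_mul_I, mul_one]

lemma grid_mem_Ioo (N : ℕ) {r : ℝ} (hr : |r| < N + 1 / 2) :
    r * (2 * π / (2 * N + 1)) ∈ Set.Ioo (-π) π := by
  have hpi := Real.pi_pos
  obtain ⟨h1, h2⟩ := abs_lt.mp hr
  rw [mul_div_assoc', Set.mem_Ioo, lt_div_iff₀ (by positivity), div_lt_iff₀ (by positivity)]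
  constructor <;> nlinarith

lemma intCast_grid_mem_Ioc (N : ℕ) {k : ℤ} (hk : k ∈ Finset.Icc (-(N : ℤ)) N) :
    (k : ℝ) * (2 * π / (2 * N + 1)) ∈ Set.Ioc (-π) π := by
  refine Set.Ioo_subset_Ioc_self (grid_mem_Ioo N ?_)
  rw [Finset.mem_Icc] at hk
  have h1 : (-(N : ℝ)) ≤ k := by exact_mod_cast hk.1
  have h2 : (k : ℝ) ≤ N := by exact_mod_cast hk.2
  rw [abs_lt]
  constructor <;> linarith

/-- Stability of sampling at perturbed nodes (a finite form of Kadec's quarter theorem). -/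
lemma norm_gridValues_le_of_perturbed {N : ℕ} {α : ℝ} (hα0 : 0 ≤ α) (hα : α ≤ 1 / 4)
    {δ : ℤ → ℝ} (hδ : ∀ j ∈ Finset.Icc (-(N : ℤ)) N, |δ j| ≤ α) (a : ℤ → ℂ) {E : ℝ} (hE : 0 ≤ E)
    (hp : ∀ j ∈ Finset.Icc (-(N : ℤ)) N, ‖∑ k ∈ Finset.Icc (-(N : ℤ)) N,
      a k * Complex.exp (Complex.I * k * (((j + δ j) * (2 * π / (2 * N + 1)) : ℝ) : ℂ))‖ ≤ E) :
    (Real.cos (π * α) - Real.sin (π * α)) * ‖gridValues N a‖ ≤ Real.sqrt (2 * N + 1) * E := by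
  have hα' : |α| ≤ 1 / 4 := by rwa [abs_of_nonneg hα0]
  set h : ℝ := 2 * π / (2 * N + 1) with hh
  set s := Finset.Icc (-(N : ℤ)) (N : ℤ)
  let P : EuclideanSpace ℂ s := WithLp.toLp 2 fun j => ∑ k ∈ s,
    a k * Complex.exp (Complex.I * k * ((((j : ℤ) + δ j) * h : ℝ) : ℂ))
  let C : EuclideanSpace ℂ s := WithLp.toLp 2 fun j => ∑ k ∈ s,
    a k * Complex.exp (Complex.I * k * (((j : ℤ) * h : ℝ) : ℂ)) *
      (1 - Complex.cos (δ j * (k * h : ℝ)))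
  let D : EuclideanSpace ℂ s := WithLp.toLp 2 fun j => ∑ k ∈ s,
    a k * Complex.exp (Complex.I * k * (((j : ℤ) * h : ℝ) : ℂ)) * Complex.sin (δ j * (k * h : ℝ))
  have hP : ‖P‖ ≤ Real.sqrt (2 * N + 1) * E := by
    rw [EuclideanSpace.norm_eq]
    calc Real.sqrt (∑ j, ‖P j‖ ^ 2) ≤ Real.sqrt (∑ _j : s, E ^ 2) := by
          gcongr with j
          exact hp j j.2
      _ = Real.sqrt (2 * N + 1) * E := by
          rw [Finset.sum_const, Finset.card_univ, Fintype.card_coe, Int.card_Icc, nsmul_eq_mul,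
            show ((N : ℤ) + 1 - -(N : ℤ)).toNat = 2 * N + 1 by omega, Real.sqrt_mul (by positivity),
            Real.sqrt_sq hE]
          push_cast
          rfl
  have hC : ‖C‖ ≤ (1 - Real.cos (π * α)) * ‖gridValues N a‖ := by
    refine norm_le_of_hasSum_weighted
      (u := fun n => gridValues N fun k => a k * Complex.exp (Complex.I * ((n * (k * h) : ℝ) : ℂ)))
      (w := fun n j => (-1) ^ n * cosWeight n (δ j)) (fun n => norm_gridValues_mul_cexp N a _)
      (fun n j => ?_) (hasSum_cosWeight hα') fun j => ?_
    · simpa using abs_cosWeight_le n (hδ j j.2) hα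
    · have := hasSum_sum (s := s) fun k hk =>
        (hasSum_one_sub_cos ((hδ j j.2).trans hα) (intCast_grid_mem_Ioc N hk)).mul_left
          (a k * Complex.exp (Complex.I * k * (((j : ℤ) * h : ℝ) : ℂ)))
      convert this using 2 with n
      · rfl
      simp only [gridValues, Finset.mul_sum]
      refine Finset.sum_congr rfl fun k _ => ?_
      rw [← hh, show Complex.I * ((n * (k * h) : ℝ) : ℂ) = Complex.I * n * (k * h : ℝ) by
        push_cast; ring]
      ring
  have hD : ‖D‖ ≤ Real.sin (π * α) * ‖gridValues N a‖ := by
    refine norm_le_of_hasSum_weighted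
      (u := fun n => gridValues N fun k =>
        a k * Complex.exp (Complex.I * (((n - 1 / 2) * (k * h) : ℝ) : ℂ)))
      (w := fun n j => Complex.I * (-1) ^ n * sinWeight n (δ j))
      (fun n => norm_gridValues_mul_cexp N a _)
      (fun n j => ?_) (hasSum_sinWeight hα') fun j => ?_
    · simpa using abs_sinWeight_le n (hδ j j.2) hα
    · have := hasSum_sum (s := s) fun k hk =>
        (hasSum_sin ((hδ j j.2).trans hα) (intCast_grid_mem_Ioc N hk)).mul_left
          (a k * Complex.exp (Complex.I * k * (((j : ℤ) * h : ℝ) : ℂ)))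
      convert this using 2 with n
      · rfl
      simp only [gridValues, Finset.mul_sum]
      refine Finset.sum_congr rfl fun k _ => ?_
      rw [← hh, show Complex.I * (((n - 1 / 2) * (k * h) : ℝ) : ℂ) =
        Complex.I * (n - 1 / 2) * (k * h : ℝ) by push_cast; ring]
      ring
  have hdecomp : gridValues N a = P + C - Complex.I • D := by
    ext j
    simp only [gridValues, P, C, D, PiLp.add_apply, PiLp.sub_apply, PiLp.smul_apply, smul_eq_mul,
      Finset.mul_sum, ← Finset.sum_add_distrib, ← Finset.sum_sub_distrib]
    refine Finset.sum_congr rfl fun k _ => ?_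
    have : Complex.exp (Complex.I * k * ((((j : ℤ) + δ j) * h : ℝ) : ℂ)) =
        Complex.exp (Complex.I * k * (((j : ℤ) * h : ℝ) : ℂ)) *
          (Complex.cos (δ j * (k * h : ℝ)) + Complex.sin (δ j * (k * h : ℝ)) * Complex.I) := by
      rw [← Complex.exp_mul_I, ← Complex.exp_add]
      push_cast
      ring_nf
    rw [this]
    ring
  have htri : ‖gridValues N a‖ ≤ ‖P‖ + ‖C‖ + ‖D‖ := by
    rw [hdecomp]
    refine (norm_sub_le _ _).trans ?_
    rw [norm_smul, Complex.norm_I, one_mul]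
    gcongr
    exact norm_add_le _ _
  linarith

lemma norm_trigPoly_le_norm_gridValues (N : ℕ) (a : ℤ → ℂ) (y : ℝ) :
    ‖∑ k ∈ Finset.Icc (-(N : ℤ)) N, a k * Complex.exp (Complex.I * k * y)‖ ≤
      ‖gridValues N a‖ := by
  rw [norm_gridValues]
  refine (norm_sum_le _ _).trans (Real.le_sqrt_of_sq_le ?_)
  have hnorm (k : ℤ) : ‖a k * Complex.exp (Complex.I * k * y)‖ = ‖a k‖ := by
    rw [norm_mul, show Complex.I * k * (y : ℂ) = ((k * y : ℝ) : ℂ) * Complex.I by push_cast; ring,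
      Complex.norm_exp_ofReal_mul_I, mul_one]
  simp only [hnorm]
  refine sq_sum_le_card_mul_sum_sq.trans_eq ?_
  rw [Int.card_Icc, show ((N : ℤ) + 1 - -(N : ℤ)).toNat = 2 * N + 1 by omega]
  push_cast
  rfl

lemma IsTrigPoly.continuous {N : ℕ} {q : ℝ → ℂ} (hq : IsTrigPoly N q) : Continuous q := by
  obtain ⟨c, hc⟩ := hq
  rw [funext hc]
  fun_prop

lemma norm_le_supIco {g : ℝ → ℂ} (hg : Continuous g) {t : ℝ} (ht : t ∈ Set.Ico (-π) π) :
    ‖g t‖ ≤ supIco g := by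
  have hbdd : BddAbove (Set.range fun x : Set.Ico (-π) π => ‖g x‖) := by
    refine ((isCompact_Icc (a := -π) (b := π)).bddAbove_image hg.norm.continuousOn).mono ?_
    rintro _ ⟨x, rfl⟩
    exact ⟨x, Set.Ico_subset_Icc_self x.2, rfl⟩
  exact le_ciSup hbdd ⟨t, ht⟩

/-- near-best approximation property of trigonometric interpolation at
α-perturbed nodes, α < 1/4. -/
theorem interpolation_lebesgue_bound (f : ℝ → ℂ) (hfc : Continuous f)
    (hfp : Function.Periodic f (2*π))
    (α : ℝ) (hα0 : 0 ≤ α) (hα : α < 1/4) (N : ℕ) (hN : 0 < N)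
    (x : ℤ → ℝ) (hx : PerturbedNodes N α x)
    (qt : ℝ → ℂ) (hqt : IsTrigPoly N qt)
    (hinterp : ∀ j ∈ Finset.Icc (-(N:ℤ)) (N:ℤ), qt (x j) = f (x j)) :
    ∀ q : ℝ → ℂ, IsTrigPoly N q → ∀ y ∈ Set.Ico (-π) π,
      ‖f y - qt y‖ ≤
        (1 + Real.sqrt (2*(N:ℝ)+1) / (Real.cos (π*α) - Real.sin (π*α))) *
          supIco (fun t => f t - q t) := by
  intro q hq y hy
  set E := supIco fun t => f t - q t
  have hcont : Continuous fun t => f t - q t := hfc.sub hq.continuous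
  have hE : 0 ≤ E := (norm_nonneg _).trans (norm_le_supIco hcont hy)
  obtain ⟨c, hc⟩ := hqt
  obtain ⟨b, hb⟩ := hq
  have hh : 0 < 2 * π / (2 * N + 1) := by positivity
  set h : ℝ := 2 * π / (2 * N + 1) with hh_def
  have hdiff (t : ℝ) : ∑ k ∈ Finset.Icc (-(N : ℤ)) N, (c - b) k * Complex.exp (Complex.I * k * t) =
      qt t - q t := by
    rw [hc, hb, ← Finset.sum_sub_distrib]
    simp only [Pi.sub_apply, sub_mul]
  have hδ : ∀ j ∈ Finset.Icc (-(N : ℤ)) N, |x j / h - j| ≤ α := fun j hj => by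
    have := hx j hj
    rw [← hh_def] at this
    rw [← mul_le_mul_iff_of_pos_right hh, ← abs_of_pos hh, ← abs_mul, abs_of_pos hh, sub_mul,
      div_mul_cancel₀ _ hh.ne']
    exact this
  have hnode (j : ℤ) : (j + (x j / h - j)) * h = x j := by field_simp; ring
  have hpos : 0 < Real.cos (π * α) - Real.sin (π * α) := by
    have hpi := Real.pi_pos
    rw [sub_pos, ← Real.sin_pi_div_two_sub]
    exact Real.sin_lt_sin_of_lt_of_le_pi_div_two (by nlinarith) (by nlinarith) (by nlinarith)
  have hstab := norm_gridValues_le_of_perturbed (N := N) hα0 hα.le hδ (c - b) hE fun j hj => by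
    rw [← hh_def, hnode, hdiff, hinterp j hj]
    refine norm_le_supIco hcont (Set.Ioo_subset_Ico_self ?_)
    rw [← hnode j]
    refine grid_mem_Ioo N ?_
    have hj' : |(j : ℝ)| ≤ N := by
      rw [Finset.mem_Icc, ← abs_le] at hj
      exact_mod_cast hj
    linarith [abs_add_le (j : ℝ) (x j / h - j), hδ j hj]
  have hpoly : ‖qt y - q y‖ ≤
      Real.sqrt (2 * N + 1) / (Real.cos (π * α) - Real.sin (π * α)) * E := by
    rw [← hdiff, div_mul_eq_mul_div, le_div_iff₀ hpos, mul_comm]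
    refine le_trans ?_ hstab
    gcongr
    exact norm_trigPoly_le_norm_gridValues N (c - b) y
  calc ‖f y - qt y‖ = ‖(f y - q y) - (qt y - q y)‖ := by ring_nf
    _ ≤ ‖f y - q y‖ + ‖qt y - q y‖ := norm_sub_le _ _
    _ ≤ E + Real.sqrt (2 * N + 1) / (Real.cos (π * α) - Real.sin (π * α)) * E :=
        add_le_add (norm_le_supIco hcont hy) hpoly
    _ = _ := by ring
end

section
/- Fix any α with 0 < α < 1/2, and for each even positive integer N let h = 2π/(2N+1) and consider the α-perturbed nodes defined by x̃_0 = 0; x̃_j = (j−α)h for −N ≤ j ≤ −1 with j even, x̃_j = (j+α)h for −N ≤ j ≤ −1 with j odd; x̃_j = (j−α)h for 1 ≤ j ≤ N with j odd, x̃_j = (j+α)h for 1 ≤ j ≤ N with j even. Let w̃_{−N},…,w̃_N be the unique quadrature weights exact on T_N for these nodes. Then for all sufficiently large even N, the central weight satisfies w̃_0 < 0. -/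
open Real Finset

/-- The weights `w` form a quadrature rule at the nodes `x` that is exact on `T_N`. -/
def ExactQuad (N : ℕ) (x : ℤ → ℝ) (w : ℤ → ℝ) : Prop :=
  ∀ q : ℝ → ℂ, IsTrigPoly N q →
    ∑ j ∈ Finset.Icc (-(N:ℤ)) (N:ℤ), (w j : ℂ) * q (x j) = ∫ t in (-π)..π, q t

/-- The α-perturbed nodes obtained by maximally perturbing the equally spaced grid in an
alternating fashion. -/
noncomputable def altNodes (N : ℕ) (α : ℝ) : ℤ → ℝ := fun j =>
  if j = 0 then 0
  else if (Even j ∧ j < 0) ∨ (Odd j ∧ 0 < j) then ((j : ℝ) - α) * (2*π/(2*N+1))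
  else ((j : ℝ) + α) * (2*π/(2*N+1))

theorem IsTrigPoly.monomial {N : ℕ} {k : ℤ} (hk : k ∈ Finset.Icc (-(N : ℤ)) (N : ℤ)) (a : ℂ) :
    IsTrigPoly N (fun x => a * Complex.exp (Complex.I * (k : ℂ) * (x : ℂ))) := by
  refine ⟨fun m => if m = k then a else 0, fun x => ?_⟩
  simp only [ite_mul, zero_mul]
  rw [Finset.sum_ite_eq' _ k, if_pos hk]

theorem IsTrigPoly.add {N : ℕ} {p q : ℝ → ℂ} (hp : IsTrigPoly N p) (hq : IsTrigPoly N q) :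
    IsTrigPoly N (fun x => p x + q x) := by
  obtain ⟨c, hc⟩ := hp
  obtain ⟨d, hd⟩ := hq
  exact ⟨fun k => c k + d k, fun x => by simp only [hc, hd, add_mul, Finset.sum_add_distrib]⟩

theorem IsTrigPoly.sum {N : ℕ} (s : Finset ℤ) {f : ℤ → ℝ → ℂ}
    (hf : ∀ k ∈ s, IsTrigPoly N (f k)) : IsTrigPoly N (fun x => ∑ k ∈ s, f k x) := by
  induction s using Finset.induction_on with
  | empty => exact ⟨0, fun x => by simp⟩
  | insert a s ha ih =>
    simp only [Finset.sum_insert ha]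
    exact (hf a (Finset.mem_insert_self a s)).add
      (ih fun k hk => hf k (Finset.mem_insert_of_mem hk))

/-- Multiplying by an affine function of `cos` raises the degree by at most one. -/
theorem IsTrigPoly.cos_affine_mul {n : ℕ} {q : ℝ → ℂ} (hq : IsTrigPoly n q) (v d : ℝ) :
    IsTrigPoly (n + 1) (fun x => (((cos x - v) / d : ℝ) : ℂ) * q x) := by
  obtain ⟨c, hc⟩ := hq
  have key : (fun x : ℝ => (((cos x - v) / d : ℝ) : ℂ) * q x) = fun x : ℝ =>
      ∑ k ∈ Finset.Icc (-(n : ℤ)) (n : ℤ),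
        (c k / (2 * d) * Complex.exp (Complex.I * ((k + 1 : ℤ) : ℂ) * (x : ℂ)) +
          c k / (2 * d) * Complex.exp (Complex.I * ((k - 1 : ℤ) : ℂ) * (x : ℂ)) +
          -(v * c k / d) * Complex.exp (Complex.I * (k : ℂ) * (x : ℂ))) := by
    funext x
    rw [hc, Finset.mul_sum]
    refine Finset.sum_congr rfl fun k _ => ?_
    have h1 : Complex.exp (Complex.I * ((k + 1 : ℤ) : ℂ) * (x : ℂ)) =
        Complex.exp (Complex.I * (k : ℂ) * (x : ℂ)) * Complex.exp ((x : ℂ) * Complex.I) := by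
      rw [← Complex.exp_add]; push_cast; ring_nf
    have h2 : Complex.exp (Complex.I * ((k - 1 : ℤ) : ℂ) * (x : ℂ)) =
        Complex.exp (Complex.I * (k : ℂ) * (x : ℂ)) * Complex.exp (-(x : ℂ) * Complex.I) := by
      rw [← Complex.exp_add]; push_cast; ring_nf
    rw [h1, h2]
    push_cast
    rw [Complex.cos]
    ring
  rw [key]
  refine IsTrigPoly.sum _ fun k hk => ?_
  rw [Finset.mem_Icc] at hk
  refine ((IsTrigPoly.monomial ?_ _).add (IsTrigPoly.monomial ?_ _)).add
    (IsTrigPoly.monomial ?_ _) <;>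
  · rw [Finset.mem_Icc]; push_cast; omega

theorem isTrigPoly_prod_cos_affine (n : ℕ) (v d : ℕ → ℝ) :
    IsTrigPoly n (fun x => ((∏ j ∈ range n, (cos x - v j) / d j : ℝ) : ℂ)) := by
  induction n with
  | zero => exact ⟨fun _ => 1, fun x => by simp⟩
  | succ n ih =>
    have := ih.cos_affine_mul (v n) (d n)
    refine (congrArg (IsTrigPoly (n + 1)) ?_).mp this
    funext x
    rw [Finset.prod_range_succ]
    push_cast
    ring

theorem sum_Icc_neg_eq_sum_range {M : Type*} [AddCommMonoid M] (N : ℕ) (F : ℤ → M) :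
    ∑ j ∈ Finset.Icc (-(N : ℤ)) (N : ℤ), F j = ∑ i ∈ range (2 * N + 1), F ((i : ℤ) - N) := by
  symm
  refine Finset.sum_bij (fun i _ => (i : ℤ) - N) ?_ ?_ ?_ ?_
  · intro i hi
    rw [Finset.mem_range] at hi
    rw [Finset.mem_Icc]
    omega
  · intro i _ j _ hij
    simpa using hij
  · intro b hb
    rw [Finset.mem_Icc] at hb
    exact ⟨(b + N).toNat, by rw [Finset.mem_range]; omega, by omega⟩
  · intros; rfl

/-- A product over a centred window of odd length, folded about its centre. -/
@[to_additive]
theorem prod_range_window {M : Type*} [CommMonoid M] (N : ℕ) (k : ℤ) (F : ℤ → M) :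
    ∏ i ∈ range (2 * N + 1), F (k + i - N) =
      F k * ∏ j ∈ range N, (F (k - (j + 1)) * F (k + (j + 1))) := by
  induction N with
  | zero => simp
  | succ N ih =>
    rw [show 2 * (N + 1) + 1 = 2 * N + 1 + 1 + 1 by ring, Finset.prod_range_succ _ (2 * N + 1 + 1),
      Finset.prod_range_succ' _ (2 * N + 1), Finset.prod_range_succ _ N]
    have h : ∀ i : ℕ, F (k + ((i + 1 : ℕ) : ℤ) - ((N + 1 : ℕ) : ℤ)) = F (k + i - N) := by
      intro i; congr 1; push_cast; ring
    simp only [h]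
    rw [ih, ← mul_assoc (F k), mul_assoc (F k * _)]
    congr 2
    · congr 1; push_cast; ring
    · congr 1; push_cast; ring

theorem integral_exp_int (k : ℤ) :
    ∫ t in (-π)..π, Complex.exp (Complex.I * (k : ℂ) * (t : ℂ)) =
      if k = 0 then 2 * (π : ℂ) else 0 := by
  split_ifs with hk
  · subst hk
    simp
    ring
  · have hc : Complex.I * (k : ℂ) ≠ 0 := mul_ne_zero Complex.I_ne_zero (by exact_mod_cast hk)
    rw [integral_exp_mul_complex hc]
    have : Complex.exp (Complex.I * (k : ℂ) * (π : ℂ)) =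
        Complex.exp (Complex.I * (k : ℂ) * ((-π : ℝ) : ℂ)) := by
      rw [Complex.exp_eq_exp_iff_exists_int]
      exact ⟨k, by push_cast; ring⟩
    rw [this, sub_self, zero_div]

theorem sum_exp_equispaced (N : ℕ) (k : ℤ) (hk : k ∈ Finset.Icc (-(N : ℤ)) (N : ℤ)) :
    ∑ j ∈ Finset.Icc (-(N : ℤ)) (N : ℤ),
      Complex.exp (Complex.I * (k : ℂ) * (((j : ℝ) * (2 * π / (2 * N + 1)) : ℝ) : ℂ)) =
      if k = 0 then (2 * N + 1 : ℂ) else 0 := by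
  rw [sum_Icc_neg_eq_sum_range]
  have hM : (2 * (N : ℂ) + 1) ≠ 0 := by exact_mod_cast (by omega : 2 * N + 1 ≠ 0)
  split_ifs with h0
  · subst h0
    simp
  · set r : ℂ := Complex.exp (Complex.I * (k : ℂ) * (2 * π / (2 * N + 1))) with hr
    have hrM : r ^ (2 * N + 1) = 1 := by
      rw [hr, ← Complex.exp_nat_mul, Complex.exp_eq_one_iff]
      exact ⟨k, by push_cast; field_simp⟩
    have hr1 : r ≠ 1 := by
      intro h
      rw [hr, Complex.exp_eq_one_iff] at h
      obtain ⟨n, hn⟩ := h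
      have hpi : (π : ℂ) ≠ 0 := by exact_mod_cast Real.pi_ne_zero
      have h2 : (k : ℂ) = n * (2 * N + 1) := by
        field_simp at hn
        linear_combination hn
      have h3 : k = n * (2 * N + 1) := by exact_mod_cast h2
      rw [Finset.mem_Icc] at hk
      rcases lt_trichotomy n 0 with hn0 | hn0 | hn0
      · nlinarith
      · subst hn0; simp at h3; exact h0 h3
      · nlinarith
    have hterm : ∀ i : ℕ, Complex.exp (Complex.I * (k : ℂ) *
        (((((i : ℤ) - N : ℤ) : ℝ) * (2 * π / (2 * N + 1)) : ℝ) : ℂ)) =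
        Complex.exp (-(N * (Complex.I * (k : ℂ) * (2 * π / (2 * N + 1))))) * r ^ i := by
      intro i
      rw [hr, ← Complex.exp_nat_mul, ← Complex.exp_add]
      congr 1
      push_cast
      ring
    rw [Finset.sum_congr rfl fun i _ => hterm i, ← Finset.mul_sum, geom_sum_eq hr1, hrM]
    simp

/-- The equispaced rule with `2N+1` nodes is exact on `T_N`. -/
theorem IsTrigPoly.integral_eq_equispaced {N : ℕ} {q : ℝ → ℂ} (hq : IsTrigPoly N q) :
    ∫ t in (-π)..π, q t = ((2 * π / (2 * N + 1) : ℝ) : ℂ) *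
      ∑ j ∈ Finset.Icc (-(N : ℤ)) (N : ℤ), q ((j : ℝ) * (2 * π / (2 * N + 1))) := by
  obtain ⟨c, hc⟩ := hq
  have hM : (2 * (N : ℂ) + 1) ≠ 0 := by exact_mod_cast (by omega : 2 * N + 1 ≠ 0)
  simp only [hc]
  rw [intervalIntegral.integral_finsetSum, Finset.sum_comm, Finset.mul_sum]
  · refine Finset.sum_congr rfl fun k hk => ?_
    rw [intervalIntegral.integral_const_mul, integral_exp_int, ← Finset.mul_sum,
      sum_exp_equispaced N k hk]
    split_ifs
    · push_cast
      field_simp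
    · simp
  · intro k _
    exact Continuous.intervalIntegrable (by fun_prop) _ _

/-- Moving two points towards each other with fixed sum increases the product of sines. -/
theorem sin_mul_sin_le_of_inward {x z δ : ℝ} (hδ : 0 ≤ δ) (hδ' : δ ≤ z - x) (hz : z - x ≤ π) :
    sin x * sin z ≤ sin (x + δ) * sin (z - δ) := by
  have hcos : cos (z - x) ≤ cos (z - x - 2 * δ) := by
    rw [← Real.cos_abs (z - x - 2 * δ)]
    exact Real.cos_le_cos_of_nonneg_of_le_pi (abs_nonneg _) hz
      (abs_le.mpr ⟨by linarith, by linarith⟩)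
  have h1 := Real.cos_sub z x
  have h2 := Real.cos_add z x
  have h3 := Real.cos_sub (z - δ) (x + δ)
  have h4 := Real.cos_add (z - δ) (x + δ)
  rw [show z - δ - (x + δ) = z - x - 2 * δ by ring] at h3
  rw [show z - δ + (x + δ) = z + x by ring] at h4
  nlinarith

theorem cos_sub_cos_eq_sin_mul_sin (a y : ℝ) :
    cos a - cos y = 2 * (sin ((y + a) / 2) * sin ((y - a) / 2)) := by
  rw [Real.cos_sub_cos, show (a - y) / 2 = -((y - a) / 2) by ring, Real.sin_neg, add_comm a y]
  ring

/-- For a `(2N+1)`-periodic `g`, the product over a window of `2N+1` points does not depend on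
the centre. -/
theorem prod_window_eq_of_periodic {g : ℤ → ℝ} {N : ℕ} (hper : ∀ i, g (i + (2 * N + 1)) = g i)
    (k : ℕ) :
    g k * ∏ j ∈ range N, (g (k - (j + 1)) * g (k + (j + 1))) =
      g 0 * ∏ j ∈ range N, (g (-(j + 1)) * g (j + 1)) := by
  induction k with
  | zero => simp
  | succ k ih =>
    rw [← ih, ← prod_range_window N (k : ℤ), ← prod_range_window N ((k + 1 : ℕ) : ℤ),
      Finset.prod_range_succ, Finset.prod_range_succ']
    congr 1
    · refine Finset.prod_congr rfl fun i _ => ?_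
      congr 1; push_cast; ring
    · rw [← hper (k + (0 : ℕ) - N)]
      congr 1; push_cast; ring

theorem prod_range_two_mul {M : Type*} [CommMonoid M] (n : ℕ) (F : ℕ → M) :
    ∏ j ∈ range (2 * n), F j = ∏ m ∈ range n, (F (2 * m) * F (2 * m + 1)) := by
  induction n with
  | zero => simp
  | succ n ih =>
    rw [show 2 * (n + 1) = 2 * n + 1 + 1 by ring, Finset.prod_range_succ, Finset.prod_range_succ,
      Finset.prod_range_succ, ih, mul_assoc]

theorem prod_range_two_mul_add_two {M : Type*} [CommMonoid M] (n : ℕ) (F : ℕ → M) :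
    ∏ j ∈ range (2 * n + 2), F j =
      F 0 * (∏ m ∈ range n, (F (2 * m + 1) * F (2 * m + 2))) * F (2 * n + 1) := by
  rw [Finset.prod_range_succ, Finset.prod_range_succ', prod_range_two_mul, mul_comm (F 0)]

/-- The zeros of the central Lagrange function in `(0, π)`. -/
noncomputable def posNode (α h : ℝ) (j : ℕ) : ℝ := (j + (-1) ^ j * α) * h

theorem posNode_even (α h : ℝ) (m : ℕ) : posNode α h (2 * m) = (2 * m + α) * h := by
  simp [posNode, pow_mul]

theorem posNode_odd (α h : ℝ) (m : ℕ) : posNode α h (2 * m + 1) = (2 * m + 1 - α) * h := by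
  have hs : (-1 : ℝ) ^ (2 * m + 1) = -1 := by simp [pow_succ, pow_mul]
  rw [posNode, hs]
  push_cast
  ring

theorem cos_altNodes (N : ℕ) (α : ℝ) {j : ℤ} (hj : j ≠ 0) :
    cos (altNodes N α j) = cos (posNode α (2 * π / (2 * N + 1)) j.natAbs) := by
  obtain ⟨n, rfl | rfl⟩ := Int.eq_nat_or_neg j
  · have hn : (0 : ℤ) < n := by omega
    rw [Int.natAbs_natCast]
    rcases Nat.even_or_odd' n with ⟨m, rfl | rfl⟩
    · have h1 : ¬ Odd ((2 * m : ℕ) : ℤ) := by simp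
      rw [altNodes, if_neg hj, if_neg (by rintro (⟨-, h⟩ | ⟨h, -⟩) <;> [omega; exact h1 h]),
        posNode_even]
      push_cast; ring_nf
    · have h1 : Odd ((2 * m + 1 : ℕ) : ℤ) := ⟨m, by push_cast; ring⟩
      rw [altNodes, if_neg hj, if_pos (Or.inr ⟨h1, hn⟩), posNode_odd]
      push_cast; ring_nf
  · have hn : (0 : ℤ) < n := by omega
    rw [Int.natAbs_neg, Int.natAbs_natCast, ← Real.cos_neg]
    rcases Nat.even_or_odd' n with ⟨m, rfl | rfl⟩
    · have h1 : Even (-((2 * m : ℕ) : ℤ)) := by simp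
      rw [altNodes, if_neg hj, if_pos (Or.inl ⟨h1, by omega⟩), posNode_even]
      push_cast; ring_nf
    · have h1 : ¬ Even (-((2 * m + 1 : ℕ) : ℤ)) := by
        rw [even_neg, Int.not_even_iff_odd]
        exact ⟨m, by push_cast; ring⟩
      rw [altNodes, if_neg hj, if_neg (by rintro (⟨h, -⟩ | ⟨-, h⟩) <;> [exact h1 h; omega]),
        posNode_odd]
      push_cast; ring_nf

theorem cos_mul_le_cos_mul {h a b : ℝ} {N : ℕ} (hh : 0 < h) (hN : (2 * N + 1) * h = 2 * π)
    (ha : 0 ≤ a) (hab : a ≤ b) (hb : b ≤ N + 1 / 2) : cos (b * h) ≤ cos (a * h) := by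
  refine Real.cos_le_cos_of_nonneg_of_le_pi (by positivity) ?_ (by gcongr)
  nlinarith

/-- On either side of `c`, moving two points towards each other with fixed sum increases
`(cos c - cos u) * (cos c - cos v)`. -/
theorem cos_sub_mul_cos_sub_le_of_inward {c u v δ : ℝ} (hδ : 0 ≤ δ) (hδ' : δ ≤ v - u)
    (hu : 0 ≤ u) (hv : v ≤ π) (hc : 0 ≤ c) (hc' : c ≤ π) (hside : c ≤ u ∨ v ≤ c) :
    (cos c - cos u) * (cos c - cos v) ≤ (cos c - cos (u + δ)) * (cos c - cos (v - δ)) := by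
  have h1 := sin_mul_sin_le_of_inward (x := (u + c) / 2) (z := (v + c) / 2) (δ := δ / 2)
    (by linarith) (by linarith) (by linarith)
  have h2 := sin_mul_sin_le_of_inward (x := (u - c) / 2) (z := (v - c) / 2) (δ := δ / 2)
    (by linarith) (by linarith) (by linarith)
  have h3 : 0 ≤ sin ((u + c) / 2) * sin ((v + c) / 2) :=
    mul_nonneg (Real.sin_nonneg_of_nonneg_of_le_pi (by linarith) (by linarith))
      (Real.sin_nonneg_of_nonneg_of_le_pi (by linarith) (by linarith))
  have h4 : 0 ≤ sin ((u - c) / 2) * sin ((v - c) / 2) := by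
    rcases hside with hs | hs
    · exact mul_nonneg (Real.sin_nonneg_of_nonneg_of_le_pi (by linarith) (by linarith))
        (Real.sin_nonneg_of_nonneg_of_le_pi (by linarith) (by linarith))
    · exact mul_nonneg_of_nonpos_of_nonpos
        (Real.sin_nonpos_of_nonpos_of_neg_pi_le (by linarith) (by linarith))
        (Real.sin_nonpos_of_nonpos_of_neg_pi_le (by linarith) (by linarith))
  have h5 := mul_le_mul h1 h2 h4 (h3.trans h1)
  simp only [cos_sub_cos_eq_sin_mul_sin c]
  rw [show (u + δ + c) / 2 = (u + c) / 2 + δ / 2 by ring,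
    show (u + δ - c) / 2 = (u - c) / 2 + δ / 2 by ring,
    show (v - δ + c) / 2 = (v + c) / 2 - δ / 2 by ring,
    show (v - δ - c) / 2 = (v - c) / 2 - δ / 2 by ring]
  linarith

/-- The Lagrange basis function of the central node. -/
noncomputable def centralLagrange (α h : ℝ) (N : ℕ) (x : ℝ) : ℝ :=
  ∏ j ∈ range N, (cos x - cos (posNode α h (j + 1))) / (1 - cos (posNode α h (j + 1)))

theorem posNode_mem {α h : ℝ} {N j : ℕ} (hα0 : 0 < α) (hα : α < 1 / 2) (hh : 0 < h)
    (hN : (2 * N + 1) * h = 2 * π) (hj : j < N) :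
    0 < posNode α h (j + 1) ∧ posNode α h (j + 1) < π := by
  have hjN : (j : ℝ) + 1 ≤ N := by exact_mod_cast hj
  have hj0 : (0 : ℝ) ≤ j := j.cast_nonneg
  have hs : -α ≤ (-1) ^ (j + 1) * α ∧ (-1) ^ (j + 1) * α ≤ α := by
    rcases neg_one_pow_eq_or ℝ (j + 1) with h | h <;> rw [h] <;> constructor <;> linarith
  unfold posNode
  push_cast
  constructor
  · exact mul_pos (by linarith) hh
  · nlinarith

theorem one_sub_cos_posNode_pos {α h : ℝ} {N j : ℕ} (hα0 : 0 < α) (hα : α < 1 / 2) (hh : 0 < h)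
    (hN : (2 * N + 1) * h = 2 * π) (hj : j < N) : 0 < 1 - cos (posNode α h (j + 1)) := by
  obtain ⟨h1, h2⟩ := posNode_mem hα0 hα hh hN hj
  have := Real.cos_lt_cos_of_nonneg_of_le_pi le_rfl h2.le h1
  rw [Real.cos_zero] at this
  linarith

theorem centralLagrange_zero {α h : ℝ} {N : ℕ} (hα0 : 0 < α) (hα : α < 1 / 2) (hh : 0 < h)
    (hN : (2 * N + 1) * h = 2 * π) : centralLagrange α h N 0 = 1 := by
  refine Finset.prod_eq_one fun j hj => ?_
  rw [Real.cos_zero]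
  exact div_self (one_sub_cos_posNode_pos hα0 hα hh hN (Finset.mem_range.mp hj)).ne'

theorem centralLagrange_nonpos {α h : ℝ} {n k : ℕ} (hα0 : 0 < α) (hα : α < 1 / 2) (hh : 0 < h)
    (hN : (2 * (2 * n : ℕ) + 1) * h = 2 * π) (hk0 : 0 < k) (hk : k ≤ 2 * n) :
    centralLagrange α h (2 * n) (k * h) ≤ 0 := by
  have hden : 0 < ∏ j ∈ range (2 * n), (1 - cos (posNode α h (j + 1))) :=
    Finset.prod_pos fun j hj =>
      one_sub_cos_posNode_pos hα0 hα hh hN (Finset.mem_range.mp hj)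
  rw [centralLagrange, Finset.prod_div_distrib]
  refine div_nonpos_of_nonpos_of_nonneg ?_ hden.le
  rw [prod_range_two_mul]
  have hkr : (k : ℝ) ≤ 2 * n := by exact_mod_cast hk
  have hodd : ∀ m : ℕ, posNode α h (2 * m + 1) = (2 * m + 1 - α) * h := posNode_odd α h
  have heven : ∀ m : ℕ, posNode α h (2 * m + 1 + 1) = (2 * m + 2 + α) * h := fun m => by
    rw [show 2 * m + 1 + 1 = 2 * (m + 1) by ring, posNode_even]; push_cast; ring
  simp only [hodd, heven]
  obtain ⟨m₀, hm₀⟩ : ∃ m₀, k = 2 * m₀ + 1 ∨ k = 2 * m₀ + 2 := ⟨(k - 1) / 2, by omega⟩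
  have hm₀n : m₀ ∈ range n := by rw [Finset.mem_range]; omega
  rw [← Finset.mul_prod_erase _ _ hm₀n]
  push_cast at hN
  refine mul_nonpos_of_nonpos_of_nonneg ?_ (Finset.prod_nonneg fun m hm => ?_)
  · have hmr : (m₀ : ℝ) + 1 ≤ n := by exact_mod_cast Finset.mem_range.mp hm₀n
    have hkm : (2 * m₀ + 1 : ℝ) ≤ k ∧ (k : ℝ) ≤ 2 * m₀ + 2 := by
      constructor
      · exact_mod_cast (by omega : 2 * m₀ + 1 ≤ k)
      · exact_mod_cast (by omega : k ≤ 2 * m₀ + 2)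
    have hm0 : (0 : ℝ) ≤ m₀ := m₀.cast_nonneg
    refine mul_nonpos_of_nonpos_of_nonneg (sub_nonpos.mpr ?_) (sub_nonneg.mpr ?_)
    · exact cos_mul_le_cos_mul (N := 2 * n) hh (by push_cast; exact hN) (by linarith)
        (by linarith) (by push_cast; linarith)
    · exact cos_mul_le_cos_mul (N := 2 * n) hh (by push_cast; exact hN) (by linarith)
        (by linarith) (by push_cast; linarith)
  · obtain ⟨hne, hmn⟩ := Finset.mem_erase.mp hm
    have hmr : (m : ℝ) + 1 ≤ n := by exact_mod_cast Finset.mem_range.mp hmn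
    have hm0 : (0 : ℝ) ≤ m := m.cast_nonneg
    have hk0' : (0 : ℝ) ≤ k := k.cast_nonneg
    rcases lt_or_gt_of_ne hne with hlt | hlt
    · have hkm : (2 * m + 3 : ℝ) ≤ k := by exact_mod_cast (by omega : 2 * m + 3 ≤ k)
      refine mul_nonneg_of_nonpos_of_nonpos (sub_nonpos.mpr ?_) (sub_nonpos.mpr ?_) <;>
      exact cos_mul_le_cos_mul (N := 2 * n) hh (by push_cast; exact hN) (by linarith)
        (by linarith) (by push_cast; linarith)
    · have hkm : (k : ℝ) ≤ 2 * m := by exact_mod_cast (by omega : k ≤ 2 * m)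
      refine mul_nonneg (sub_nonneg.mpr ?_) (sub_nonneg.mpr ?_) <;>
      exact cos_mul_le_cos_mul (N := 2 * n) hh (by push_cast; exact hN) (by linarith)
        (by linarith) (by push_cast; linarith)

theorem prod_one_sub_cos_posNode_le {α h : ℝ} {n : ℕ} (hα0 : 0 < α) (hα : α < 1 / 2)
    (hh : 0 < h) (hN : (2 * (2 * n : ℕ) + 1) * h = 2 * π) :
    ∏ j ∈ range (2 * n), (1 - cos (posNode α h (j + 1))) ≤
      ∏ j ∈ range (2 * n), (1 - cos ((j + 1 : ℕ) * h)) := by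
  rw [prod_range_two_mul, prod_range_two_mul]
  refine Finset.prod_le_prod (fun m _ => ?_) fun m hm => ?_
  · exact mul_nonneg (sub_nonneg.mpr (Real.cos_le_one _)) (sub_nonneg.mpr (Real.cos_le_one _))
  · have hmr : (m : ℝ) + 1 ≤ n := by exact_mod_cast Finset.mem_range.mp hm
    have hm0 : (0 : ℝ) ≤ m := m.cast_nonneg
    push_cast at hN
    have hαh : 0 < α * h := mul_pos hα0 hh
    have := cos_sub_mul_cos_sub_le_of_inward (c := 0) (u := (2 * m + 1 - α) * h)
      (v := (2 * m + 2 + α) * h) (δ := α * h) hαh.le (by nlinarith)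
      (mul_nonneg (by linarith) hh.le) (by nlinarith) le_rfl Real.pi_pos.le
      (Or.inl (mul_nonneg (by linarith) hh.le))
    rw [Real.cos_zero, show (2 * m + 1 - α) * h + α * h = (2 * m + 1) * h by ring,
      show (2 * m + 2 + α) * h - α * h = (2 * (m + 1)) * h by ring,
      show (2 * m + 2 + α) * h = (2 * (m + 1) + α) * h by ring] at this
    rw [posNode_odd, show 2 * m + 1 + 1 = 2 * (m + 1) by ring, posNode_even]
    push_cast
    exact this

theorem sin_le_two_mul_sin {x y : ℝ} (hx : 0 ≤ x) (hxy : x ≤ 2 * y) (hy : y ≤ π / 2) :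
    sin x ≤ 2 * sin y := by
  have h1 : sin x = 2 * sin (x / 2) * cos (x / 2) := by
    rw [← Real.sin_two_mul]; ring_nf
  have h2 : sin (x / 2) ≤ sin y :=
    Real.sin_le_sin_of_le_of_le_pi_div_two (by linarith [Real.pi_pos]) hy (by linarith)
  have h3 : 0 ≤ sin (x / 2) :=
    Real.sin_nonneg_of_nonneg_of_le_pi (by linarith) (by linarith [Real.pi_pos])
  nlinarith [Real.cos_le_one (x / 2)]

/-- Chord lengths `2 |sin (i h / 2)|` of the equispaced grid, with the vanishing ones replaced by
`1`. -/
noncomputable def chord (N : ℕ) (h : ℝ) (i : ℤ) : ℝ :=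
  if (2 * N + 1 : ℤ) ∣ i then 1 else 2 * |sin (i * h / 2)|

theorem chord_add_period {N : ℕ} {h : ℝ} (hN : (2 * N + 1) * h = 2 * π) (i : ℤ) :
    chord N h (i + (2 * N + 1)) = chord N h i := by
  unfold chord
  have h1 : (2 * N + 1 : ℤ) ∣ i + (2 * N + 1) ↔ (2 * N + 1 : ℤ) ∣ i := by simp
  simp only [h1]
  congr 2
  rw [show ((i + (2 * N + 1) : ℤ) : ℝ) * h / 2 = i * h / 2 + π by push_cast; linarith,
    Real.sin_add_pi, abs_neg]

theorem chord_of_abs_lt {N : ℕ} {h : ℝ} {i : ℤ} (h0 : i ≠ 0) (hi : |i| < 2 * N + 1) :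
    chord N h i = 2 * |sin (i * h / 2)| := by
  rw [chord, if_neg]
  intro hd
  exact h0 (Int.eq_zero_of_abs_lt_dvd hd hi)

theorem chord_mul_chord {N k j : ℕ} {h : ℝ} (hj : 0 < j) (hjk : j ≠ k) (hkN : k ≤ N)
    (hjN : j ≤ N) :
    chord N h (k - j) * chord N h (k + j) = 2 * |cos (k * h) - cos (j * h)| := by
  rw [chord_of_abs_lt (by omega) (by rw [abs_lt]; constructor <;> omega),
    chord_of_abs_lt (by omega) (by rw [abs_lt]; constructor <;> omega), Real.cos_sub_cos]
  simp only [abs_mul, abs_neg]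
  push_cast
  rw [abs_two]
  ring_nf

/-- The unperturbed numerator product at the node `k h`, with the vanishing factor removed. -/
theorem prod_erased_cos_sub {N k : ℕ} {h : ℝ} (hN : (2 * N + 1) * h = 2 * π)
    (hk0 : 0 < k) (hk : k ≤ N) (hs : 0 < sin (k * h)) (hs' : 0 < sin (k * h / 2)) (e : ℝ) :
    ∏ j ∈ range N, (if j + 1 = k then e else |cos (k * h) - cos ((j + 1 : ℕ) * h)|) =
      (∏ j ∈ range N, (1 - cos ((j + 1 : ℕ) * h))) * (e / (2 * sin (k * h) * sin (k * h / 2))) := by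
  have hwin := prod_window_eq_of_periodic (chord_add_period hN) k
  have hk1 : chord N h k = 2 * sin (k * h / 2) := by
    rw [chord_of_abs_lt (by omega) (by rw [abs_lt]; constructor <;> omega), Int.cast_natCast,
      abs_of_pos hs']
  have h0 : chord N h 0 = 1 := by simp [chord]
  have hright : ∀ j ∈ range N, chord N h (-((j : ℤ) + 1)) * chord N h ((j : ℤ) + 1) =
      2 * (1 - cos ((j + 1 : ℕ) * h)) := by
    intro j hj
    have := chord_mul_chord (N := N) (k := 0) (j := j + 1) (h := h) (by omega) (by omega)
      (by omega) (Finset.mem_range.mp hj)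
    simp only [Nat.cast_zero, zero_mul, Real.cos_zero] at this
    rw [abs_of_nonneg (sub_nonneg.mpr (Real.cos_le_one _))] at this
    rw [← this]
    push_cast
    congr 2; ring
  have hleft : ∀ j ∈ range N,
      2 * (if j + 1 = k then e else |cos (k * h) - cos ((j + 1 : ℕ) * h)|) =
      (chord N h (k - ((j : ℤ) + 1)) * chord N h (k + ((j : ℤ) + 1))) *
        (if j = k - 1 then e / sin (k * h) else 1) := by
    intro j hj
    rw [Finset.mem_range] at hj
    by_cases hjk : j + 1 = k
    · rw [if_pos hjk, if_pos (by omega), show (k : ℤ) - ((j : ℤ) + 1) = 0 by omega, h0,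
        chord_of_abs_lt (by omega) (by rw [abs_lt]; constructor <;> omega),
        show (((k : ℤ) + ((j : ℤ) + 1) : ℤ) : ℝ) * h / 2 = k * h by
          rw [← hjk]; push_cast; ring, abs_of_pos hs]
      field_simp
    · rw [if_neg hjk, if_neg (by omega), mul_one, ← chord_mul_chord (by omega) hjk hk hj]
      push_cast
      rfl
  have hdouble : ∏ j ∈ range N, 2 * (1 - cos ((j + 1 : ℕ) * h)) =
      2 ^ (range N).card * ∏ j ∈ range N, (1 - cos ((j + 1 : ℕ) * h)) := by
    rw [Finset.prod_mul_distrib, Finset.prod_const]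
  have hkm : k - 1 ∈ range N := by rw [Finset.mem_range]; omega
  have hprod := Finset.prod_congr rfl hleft
  rw [Finset.prod_mul_distrib, Finset.prod_mul_distrib, Finset.prod_ite_eq' _ (k - 1),
    if_pos hkm, Finset.prod_const] at hprod
  rw [hk1, h0, one_mul, Finset.prod_congr rfl hright, hdouble] at hwin
  have h2 : (2 : ℝ) ^ (range N).card ≠ 0 := by positivity
  refine mul_left_cancel₀ h2 ?_
  rw [hprod, ← mul_assoc, ← hwin]
  field_simp

/-- Pairing consecutive factors shows that, up to a factor `1/4`, the perturbation only increases
the numerator product away from the node itself. -/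
theorem prod_erased_cos_sub_le {α h : ℝ} {n p : ℕ} (hα0 : 0 < α) (hα : α < 1 / 2) (hh : 0 < h)
    (hN : (2 * (2 * n + 2 : ℕ) + 1) * h = 2 * π) (hp0 : 0 < p) (hp : 2 * p ≤ n) :
    ∏ j ∈ range (2 * n + 2), (if j + 1 = 2 * p then
        |cos ((2 * p : ℕ) * h) - cos (posNode α h (2 * p))| / 4
        else |cos ((2 * p : ℕ) * h) - cos ((j + 1 : ℕ) * h)|) ≤
      ∏ j ∈ range (2 * n + 2), |cos ((2 * p : ℕ) * h) - cos (posNode α h (j + 1))| := by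
  rw [prod_range_two_mul_add_two, prod_range_two_mul_add_two]
  have hnn : ∀ j : ℕ, 0 ≤ (if j + 1 = 2 * p then
        |cos ((2 * p : ℕ) * h) - cos (posNode α h (2 * p))| / 4
        else |cos ((2 * p : ℕ) * h) - cos ((j + 1 : ℕ) * h)|) := by
    intro j; split_ifs <;> positivity
  have hN' := hN
  push_cast at hN
  have hpr : (2 * p : ℝ) ≤ n := by exact_mod_cast hp
  have hp1 : (1 : ℝ) ≤ p := by exact_mod_cast hp0
  have hαh : 0 < α * h := mul_pos hα0 hh
  refine mul_le_mul (mul_le_mul ?_ (Finset.prod_le_prod (fun m _ => mul_nonneg (hnn _) (hnn _))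
    fun m hm => ?_) (Finset.prod_nonneg fun m _ => mul_nonneg (hnn _) (hnn _)) (abs_nonneg _))
    ?_ (hnn _) (mul_nonneg (abs_nonneg _)
      (Finset.prod_nonneg fun m _ => mul_nonneg (abs_nonneg _) (abs_nonneg _)))
  · rw [if_neg (by omega), show 0 + 1 = 2 * 0 + 1 by ring, posNode_odd]
    push_cast
    have h1 : cos (2 * p * h) ≤ cos (1 * h) :=
      cos_mul_le_cos_mul hh hN' (by linarith) (by linarith) (by push_cast; linarith)
    have h2 : cos (1 * h) ≤ cos ((2 * 0 + 1 - α) * h) :=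
      cos_mul_le_cos_mul hh hN' (by linarith) (by linarith) (by push_cast; linarith)
    rw [abs_of_nonpos (by linarith), abs_of_nonpos (by linarith)]
    linarith
  · have hmr : (m : ℝ) + 1 ≤ n := by exact_mod_cast Finset.mem_range.mp hm
    have hm0 : (0 : ℝ) ≤ m := m.cast_nonneg
    rw [if_neg (by omega : ¬ 2 * m + 2 + 1 = 2 * p), show 2 * m + 2 + 1 = 2 * (m + 1) + 1 by ring,
      show 2 * m + 1 + 1 = 2 * (m + 1) by ring, posNode_odd, posNode_even α h (m + 1)]
    by_cases hmp : m + 1 = p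
    · subst hmp
      rw [if_pos rfl, posNode_even, div_mul_eq_mul_div, mul_div_assoc]
      refine mul_le_mul_of_nonneg_left ?_ (abs_nonneg _)
      push_cast at hpr ⊢
      rw [cos_sub_cos_eq_sin_mul_sin, cos_sub_cos_eq_sin_mul_sin]
      have b1 : 0 ≤ sin (((2 * ((m : ℝ) + 1) + 1) * h + 2 * (m + 1) * h) / 2) :=
        Real.sin_nonneg_of_nonneg_of_le_pi (by positivity) (by nlinarith)
      have b2 : 0 ≤ sin (((2 * ((m : ℝ) + 1) + 1) * h - 2 * (m + 1) * h) / 2) :=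
        Real.sin_nonneg_of_nonneg_of_le_pi (by nlinarith) (by nlinarith)
      have b3 : sin (((2 * ((m : ℝ) + 1) + 1) * h + 2 * (m + 1) * h) / 2) ≤
          2 * sin (((2 * ((m : ℝ) + 1) + 1 - α) * h + 2 * (m + 1) * h) / 2) :=
        sin_le_two_mul_sin (by positivity) (by nlinarith) (by nlinarith)
      have b4 : sin (((2 * ((m : ℝ) + 1) + 1) * h - 2 * (m + 1) * h) / 2) ≤
          2 * sin (((2 * ((m : ℝ) + 1) + 1 - α) * h - 2 * (m + 1) * h) / 2) :=
        sin_le_two_mul_sin (by nlinarith) (by nlinarith) (by nlinarith)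
      have b5 := mul_le_mul b3 b4 b2 (b1.trans b3)
      rw [abs_of_nonneg (by positivity)]
      refine le_trans ?_ (le_abs_self _)
      linarith
    · rw [if_neg (by omega), ← abs_mul, ← abs_mul]
      have hside : (2 * p * h ≤ 2 * (m + 1) * h) ∨ ((2 * (m + 1) + 1) * h ≤ 2 * p * h) := by
        rcases lt_or_gt_of_ne hmp with hlt | hlt
        · right
          have : (m : ℝ) + 2 ≤ p := by exact_mod_cast hlt
          exact mul_le_mul_of_nonneg_right (by linarith) hh.le
        · left
          have : (p : ℝ) ≤ m + 1 := by exact_mod_cast hlt.le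
          exact mul_le_mul_of_nonneg_right (by linarith) hh.le
      have hin := cos_sub_mul_cos_sub_le_of_inward (c := 2 * p * h) (u := 2 * (m + 1) * h)
        (v := (2 * (m + 1) + 1) * h) (δ := α * h) hαh.le (by nlinarith) (by positivity)
        (by nlinarith) (by positivity) (by nlinarith) hside
      rw [show 2 * ((m : ℝ) + 1) * h + α * h = (2 * (m + 1) + α) * h by ring,
        show (2 * ((m : ℝ) + 1) + 1) * h - α * h = (2 * (m + 1) + 1 - α) * h by ring] at hin
      push_cast
      refine le_trans (le_of_eq (abs_of_nonneg ?_)) (hin.trans (le_abs_self _))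
      rcases hside with hs | hs
      · have := le_of_mul_le_mul_right hs hh
        refine mul_nonneg (sub_nonneg.mpr ?_) (sub_nonneg.mpr ?_) <;>
        exact cos_mul_le_cos_mul hh hN' (by linarith) (by linarith) (by push_cast; linarith)
      · have := le_of_mul_le_mul_right hs hh
        refine mul_nonneg_of_nonpos_of_nonpos (sub_nonpos.mpr ?_) (sub_nonpos.mpr ?_) <;>
        exact cos_mul_le_cos_mul hh hN' (by linarith) (by linarith) (by push_cast; linarith)
  · rw [if_neg (by omega), show 2 * n + 1 + 1 = 2 * (n + 1) by ring, posNode_even]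
    push_cast
    have h1 : cos (2 * (n + 1) * h) ≤ cos (2 * p * h) :=
      cos_mul_le_cos_mul hh hN' (by linarith) (by linarith) (by push_cast; linarith)
    have h2 : cos ((2 * (n + 1) + α) * h) ≤ cos (2 * (n + 1) * h) :=
      cos_mul_le_cos_mul hh hN' (by linarith) (by linarith) (by push_cast; linarith)
    rw [abs_of_nonneg (by linarith), abs_of_nonneg (by linarith)]
    linarith

theorem centralLagrange_le {α h : ℝ} {n p : ℕ} (hα0 : 0 < α) (hα : α < 1 / 2) (hh : 0 < h)
    (hN : (2 * (2 * n + 2 : ℕ) + 1) * h = 2 * π) (hp0 : 0 < p) (hp : 2 * p ≤ n) :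
    centralLagrange α h (2 * n + 2) ((2 * p : ℕ) * h) ≤ -(α / (4 * π) * (1 / p)) := by
  have hneg := centralLagrange_nonpos (n := n + 1) (k := 2 * p) hα0 hα hh hN (by omega) (by omega)
  rw [show 2 * (n + 1) = 2 * n + 2 by ring] at hneg
  rw [← neg_neg (centralLagrange _ _ _ _), neg_le_neg_iff, ← abs_of_nonpos hneg, centralLagrange,
    Finset.prod_div_distrib, abs_div, Finset.abs_prod]
  have hVpos : 0 < ∏ j ∈ range (2 * n + 2), (1 - cos (posNode α h (j + 1))) :=
    Finset.prod_pos fun j hj => one_sub_cos_posNode_pos hα0 hα hh hN (Finset.mem_range.mp hj)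
  have hVU := prod_one_sub_cos_posNode_le (n := n + 1) hα0 hα hh hN
  rw [show 2 * (n + 1) = 2 * n + 2 by ring] at hVU
  rw [abs_of_pos hVpos, le_div_iff₀ hVpos]
  refine le_trans ?_ (prod_erased_cos_sub_le hα0 hα hh hN hp0 hp)
  have hpr : (2 * p : ℝ) ≤ n := by exact_mod_cast hp
  have hp1 : (1 : ℝ) ≤ p := by exact_mod_cast hp0
  have hαh : 0 < α * h := mul_pos hα0 hh
  have hN' := hN
  push_cast at hN
  have hph : 0 < 2 * (p : ℝ) * h := by positivity
  have hphπ : (2 * (p : ℝ) + 1 / 2) * h ≤ π / 2 := by nlinarith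
  have hs : 0 < sin ((2 * p : ℕ) * h) := by
    push_cast
    exact Real.sin_pos_of_pos_of_lt_pi hph (by nlinarith)
  have hs' : 0 < sin ((2 * p : ℕ) * h / 2) := by
    push_cast
    exact Real.sin_pos_of_pos_of_lt_pi (by linarith) (by nlinarith)
  rw [prod_erased_cos_sub hN' (by omega) (by omega) hs hs', mul_comm]
  refine mul_le_mul hVU ?_ (by positivity) (hVpos.le.trans hVU)
  rw [posNode_even, cos_sub_cos_eq_sin_mul_sin]
  push_cast at hs hs' ⊢
  have h1 : sin (2 * p * h) ≤ sin (((2 * p + α) * h + 2 * p * h) / 2) :=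
    Real.sin_le_sin_of_le_of_le_pi_div_two (by linarith [Real.pi_pos]) (by nlinarith)
      (by nlinarith)
  have h2 : α * h / π ≤ sin (((2 * p + α) * h - 2 * p * h) / 2) := by
    have := Real.mul_le_sin (x := ((2 * p + α) * h - 2 * p * h) / 2) (by nlinarith) (by nlinarith)
    refine le_trans (le_of_eq ?_) this
    field_simp
    ring
  have h3 : sin (2 * p * h / 2) ≤ p * h := by
    have := Real.sin_le (x := 2 * p * h / 2) (by linarith)
    linarith
  have h4 : 0 < α * h / π := by positivity
  rw [abs_of_nonneg (by have := hs.trans_le h1; have := h4.trans_le h2; positivity),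
    le_div_iff₀ (by positivity)]
  have h5 := mul_le_mul h1 h2 h4.le (hs.trans_le h1).le
  have h6 : α / (4 * π) * (1 / p) * (2 * sin (2 * p * h) * sin (2 * p * h / 2)) ≤
      α / (4 * π) * (1 / p) * (2 * sin (2 * p * h) * (p * h)) := by gcongr
  have h7 : α / (4 * π) * (1 / p) * (2 * sin (2 * p * h) * (p * h)) =
      sin (2 * p * h) * (α * h / π) / 2 := by field_simp; ring
  linarith

theorem weight_zero_eq {α : ℝ} {N : ℕ} (hα0 : 0 < α) (hα : α < 1 / 2) {w : ℤ → ℝ}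
    (hw : ExactQuad N (altNodes N α) w) :
    w 0 = 2 * π / (2 * N + 1) * (1 + 2 * ∑ j ∈ range N,
      centralLagrange α (2 * π / (2 * N + 1)) N ((j + 1 : ℕ) * (2 * π / (2 * N + 1)))) := by
  set h : ℝ := 2 * π / (2 * N + 1) with hh_def
  have hh : 0 < h := by positivity
  have hN : (2 * N + 1) * h = 2 * π := by rw [hh_def]; field_simp
  have htrig : IsTrigPoly N (fun x => (centralLagrange α h N x : ℂ)) :=
    isTrigPoly_prod_cos_affine N (fun j => cos (posNode α h (j + 1)))
      (fun j => 1 - cos (posNode α h (j + 1)))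
  have hq := hw _ htrig
  rw [htrig.integral_eq_equispaced, ← hh_def,
    Finset.sum_eq_single_of_mem 0 (by simp) ?_] at hq
  · have h0 : altNodes N α 0 = 0 := by simp [altNodes]
    rw [h0, centralLagrange_zero hα0 hα hh hN, Complex.ofReal_one, mul_one] at hq
    have hq' : w 0 = h * ∑ j ∈ Finset.Icc (-(N : ℤ)) (N : ℤ), centralLagrange α h N (j * h) := by
      exact_mod_cast hq
    rw [hq', sum_Icc_neg_eq_sum_range]
    have hwin := sum_range_window N 0 (fun j : ℤ => centralLagrange α h N (j * h))
    simp only [zero_add] at hwin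
    rw [hwin, Int.cast_zero, zero_mul, centralLagrange_zero hα0 hα hh hN, Finset.mul_sum]
    congr 2
    refine Finset.sum_congr rfl fun j _ => ?_
    have heven : centralLagrange α h N (((0 - ((j : ℤ) + 1) : ℤ) : ℝ) * h) =
        centralLagrange α h N ((j + 1 : ℕ) * h) := by
      rw [show (((0 - ((j : ℤ) + 1) : ℤ) : ℝ) * h) = -(((j + 1 : ℕ) : ℝ) * h) by push_cast; ring]
      simp only [centralLagrange, Real.cos_neg]
    rw [heven]
    push_cast
    ring
  · intro j hj hj0
    rw [Finset.mem_Icc] at hj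
    have hzero : centralLagrange α h N (altNodes N α j) = 0 := by
      refine Finset.prod_eq_zero (i := j.natAbs - 1) (by rw [Finset.mem_range]; omega) ?_
      rw [cos_altNodes N α hj0, show j.natAbs - 1 + 1 = j.natAbs by omega, sub_self, zero_div]
    rw [hzero, Complex.ofReal_zero, mul_zero]

/-- for any α > 0, the central quadrature weight for the alternating maximally
perturbed nodes is negative for all sufficiently large even N. -/
theorem central_weight_negative (α : ℝ) (hα0 : 0 < α) (hα : α < 1/2) :
    ∃ N₀ : ℕ, ∀ N : ℕ, Even N → N₀ ≤ N →
      ∀ w : ℤ → ℝ, ExactQuad N (altNodes N α) w → w 0 < 0 := by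
  obtain ⟨K, hK⟩ := (Real.tendsto_sum_range_one_div_nat_succ_atTop.eventually_gt_atTop
    (2 * π / α)).exists
  refine ⟨4 * K + 2, fun N hNe hNK w hw => ?_⟩
  obtain ⟨n, rfl⟩ : ∃ n, N = 2 * n + 2 := by
    obtain ⟨m, rfl⟩ := hNe
    exact ⟨m - 1, by omega⟩
  rw [weight_zero_eq hα0 hα hw]
  set h : ℝ := 2 * π / (2 * (2 * n + 2 : ℕ) + 1) with hh_def
  have hh : 0 < h := by positivity
  have hN : (2 * (2 * n + 2 : ℕ) + 1) * h = 2 * π := by rw [hh_def]; field_simp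
  refine mul_neg_of_pos_of_neg hh ?_
  have hnonpos : ∀ j ∈ range (2 * n + 2),
      centralLagrange α h (2 * n + 2) ((j + 1 : ℕ) * h) ≤ 0 := fun j hj =>
    centralLagrange_nonpos (n := n + 1) hα0 hα hh hN (by omega) (Finset.mem_range.mp hj)
  have hsub : (range K).image (fun m => 2 * m + 1) ⊆ range (2 * n + 2) := by
    intro j hj
    obtain ⟨m, hm, rfl⟩ := Finset.mem_image.mp hj
    rw [Finset.mem_range] at hm ⊢
    omega
  have hsum : ∑ j ∈ range (2 * n + 2), centralLagrange α h (2 * n + 2) ((j + 1 : ℕ) * h) ≤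
      ∑ m ∈ range K, -(α / (4 * π) * (1 / ((m : ℝ) + 1))) := by
    have hle := Finset.sum_le_sum_of_subset_of_nonneg hsub
      fun j hj _ => neg_nonneg.mpr (hnonpos j hj)
    rw [Finset.sum_neg_distrib, Finset.sum_neg_distrib, neg_le_neg_iff] at hle
    refine hle.trans ?_
    rw [Finset.sum_image (by intro a _ b _ hab; simpa using hab)]
    refine Finset.sum_le_sum fun m hm => ?_
    rw [Finset.mem_range] at hm
    have := centralLagrange_le (p := m + 1) hα0 hα hh hN (by omega) (by omega)
    rw [show 2 * m + 1 + 1 = 2 * (m + 1) by ring]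
    exact_mod_cast this
  rw [Finset.sum_neg_distrib, ← Finset.mul_sum] at hsum
  have hlarge : 1 / 2 < α / (4 * π) * ∑ m ∈ range K, 1 / ((m : ℝ) + 1) := by
    have hpos : 0 < α / (4 * π) := by positivity
    calc (1 / 2 : ℝ) = α / (4 * π) * (2 * π / α) := by field_simp; norm_num
      _ < _ := mul_lt_mul_of_pos_left hK hpos
  linarith
end
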